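/- arXiv:2002.11087 — 3 statements merged into one kernel-verified Lean document; each statement's English description precedes it below -/
import Mathlib

section
/- Let q = (q_ij)_{i,j∈I} satisfy q_ij q_ji = 1 for all i ≠ j (quantum linear space). Suppose i ≠ j with ord(q_ii) + ord(q_jj) > 4 (orders in N ∪ {∞}). Then in any pre-Nichols algebra B of q with finite GK-dimension, x_{ij} := x_i x_j − q_ij x_j x_i = 0. -/
open scoped TensorProduct ENNReal

noncomputable section

namespace Stmt12

/-- The Gelfand–Kirillov dimension of a `k`-algebra `A`. -/
def GKdim (k A : Type*) [Field k] [Ring A] [Algebra k A] : ℝ≥0∞ :=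
  ⨆ S : Finset A,
    Filter.limsup
      (fun n : ℕ => ENNReal.ofReal (Real.logb n
        (Module.finrank k ((Submodule.span k (insert (1 : A) (S : Set A))) ^ n : Submodule k A))))
      Filter.atTop

/-- The `ℤ^θ`-homogeneous component of degree `d` of the free (tensor) algebra:
the span of words in the generators with letter-count vector `d`. -/
def piece (k : Type*) [Field k] (θ : ℕ) (d : Fin θ → ℤ) :
    Submodule k (FreeAlgebra k (Fin θ)) :=
  Submodule.span k {y | ∃ l : List (Fin θ),
    (∀ i, (l.count i : ℤ) = d i) ∧ y = (l.map (FreeAlgebra.ι k)).prod}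

/-- The bicharacter on `ℤ^θ` extending a braiding matrix `Q`. -/
def qb {k : Type*} [Field k] {θ : ℕ} (Q : Fin θ → Fin θ → kˣ) (α β : Fin θ → ℤ) : kˣ :=
  ∏ a, ∏ b, Q a b ^ (α a * β b)

end Stmt12

open Stmt12

/-!
Suppose `x_ij ≠ 0` in the quotient `B`. Dualise: among the functionals on `T(V)` that factor
through `B`, left convolution with coefficient functionals yields raising operators for `x_i`, `x_j`
and `c = x_ij`, while the transposes of left multiplication by letters lower degrees and act as skew
derivations. Since `q_ij q_ji = 1`, the operators for `x_i` and for the iterated adjoints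
`(ad x_j)^n c` satisfy the relations of a braided vector space of diagonal type of rank two. The
condition `ord(q_ii) + ord(q_jj) > 4` makes one of these rank-two braidings too large: either all
root vectors `(ad x_v)^n x_u` survive, or there is a root `δ` in the radical of the symmetrised
bicharacter, and then all root vectors of degree `β + nδ` survive. In both cases the squarefree
products of an infinite sequence of root vectors are linearly independent, and `2^L` of them lie in
degree `O(L²)`. Such growth forces infinite GK-dimension.
-/

lemma pow_invtSubmodule {R M : Type*} [CommSemiring R] [AddCommMonoid M] [Module R M]
    {f : Module.End R M} {N : Submodule R M} (h : N ∈ f.invtSubmodule) (n : ℕ) :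
    N ∈ (f ^ n).invtSubmodule := by
  induction n with
  | zero => exact fun _ hx => hx
  | succ _ ih => exact fun _ hx => ih (h hx)

section SquarefreeProducts

variable {k A : Type*} [Field k] [Ring A] [Algebra k A]

/-- The span of the squarefree products `f i₁ * ⋯ * f iᵣ` with `n ≤ i₁ < ⋯ < iᵣ < n + L`. -/
def sqfreeSpan (k : Type*) {A : Type*} [Field k] [Ring A] [Algebra k A] (f : ℕ → A) :
    ℕ → ℕ → Submodule k A
  | 0, _ => 1
  | L + 1, n => sqfreeSpan k f L (n + 1) ⊔
      (sqfreeSpan k f L (n + 1)).map (LinearMap.mulLeft k (f n))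

/-- The subalgebra generated by the terms `f i` with `n ≤ i`. -/
def adjoinTail (k : Type*) {A : Type*} [Field k] [Ring A] [Algebra k A] (f : ℕ → A) (n : ℕ) :
    Subalgebra k A :=
  Algebra.adjoin k (f '' Set.Ici n)

lemma mem_adjoinTail (f : ℕ → A) {n i : ℕ} (h : n ≤ i) : f i ∈ adjoinTail k f n :=
  Algebra.subset_adjoin ⟨i, h, rfl⟩

lemma adjoinTail_antitone (f : ℕ → A) : Antitone (adjoinTail k f) := fun _ _ h =>
  Algebra.adjoin_mono (Set.image_mono (Set.Ici_subset_Ici.2 h))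

lemma sqfreeSpan_le_adjoinTail (f : ℕ → A) (L n : ℕ) :
    sqfreeSpan k f L n ≤ Subalgebra.toSubmodule (adjoinTail k f n) := by
  induction L generalizing n with
  | zero => exact Submodule.one_le.2 (one_mem (adjoinTail k f n))
  | succ L ih =>
    have h := (ih (n + 1)).trans
      (Subalgebra.toSubmodule.monotone (adjoinTail_antitone f (Nat.le_succ n)))
    refine sup_le h ?_
    rintro _ ⟨x, hx, rfl⟩
    exact (adjoinTail k f n).mul_mem (mem_adjoinTail f le_rfl) (h hx)

/-- Operators showing that the squarefree products of a sequence `f` are independent: the skew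
derivation `lower` sends each term to a nonzero multiple of the preceding one, and `detect`
recognises the factor `f 0`. The subalgebra `domain` contains all the terms but `f 0`. -/
structure LoweringData (k : Type*) {A : Type*} [Field k] [Ring A] [Algebra k A]
    (f : ℕ → A) where
  domain : Subalgebra k A
  twist : A →ₐ[k] A
  lower : Module.End k A
  detect : Module.End k A
  mem_domain : ∀ n, f (n + 1) ∈ domain
  exists_twist : ∀ n, ∃ b : k, twist (f n) = b • f n
  lower_one : lower 1 = 0
  lower_mul : ∀ x ∈ domain, ∀ y ∈ domain, lower (x * y) = lower x * y + twist x * lower y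
  exists_lower : ∀ n, ∃ b : k, b ≠ 0 ∧ lower (f (n + 1)) = b • f n
  detect_domain : ∀ z ∈ domain, detect z = 0
  exists_detect : ∃ b : k, b ≠ 0 ∧ ∀ z ∈ domain, detect (f 0 * z) = b • z

namespace LoweringData

variable {f : ℕ → A} (D : LoweringData k f)

lemma adjoinTail_succ_le_domain (n : ℕ) : adjoinTail k f (n + 1) ≤ D.domain := by
  refine Algebra.adjoin_le ?_
  rintro _ ⟨_ | i, hi, rfl⟩
  · exact absurd hi (by simp)
  · exact D.mem_domain i

lemma twist_mem_adjoinTail {n : ℕ} {x : A} (hx : x ∈ adjoinTail k f n) :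
    D.twist x ∈ adjoinTail k f n := by
  suffices adjoinTail k f n ≤ (adjoinTail k f n).comap D.twist from this hx
  refine Algebra.adjoin_le ?_
  rintro _ ⟨i, hi, rfl⟩
  obtain ⟨b, hb⟩ := D.exists_twist i
  change D.twist (f i) ∈ adjoinTail k f n
  exact hb ▸ (adjoinTail k f n).smul_mem (mem_adjoinTail f hi) b

lemma lower_mem_adjoinTail {n : ℕ} {x : A} (hx : x ∈ adjoinTail k f (n + 1)) :
    D.lower x ∈ adjoinTail k f n := by
  have hle := adjoinTail_antitone (k := k) f (Nat.le_succ n)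
  induction hx using Algebra.adjoin_induction with
  | mem x hx =>
    obtain ⟨_ | i, hi, rfl⟩ := hx
    · exact absurd hi (by simp)
    · obtain ⟨b, -, hb⟩ := D.exists_lower i
      exact hb ▸ (adjoinTail k f n).smul_mem (mem_adjoinTail f (Nat.succ_le_succ_iff.1 hi)) b
  | algebraMap r =>
    rw [Algebra.algebraMap_eq_smul_one, map_smul, D.lower_one, smul_zero]
    exact zero_mem _
  | add x y _ _ hx hy => exact map_add D.lower x y ▸ add_mem hx hy
  | mul x y hx hy hDx hDy =>
    rw [D.lower_mul _ (D.adjoinTail_succ_le_domain n hx) _ (D.adjoinTail_succ_le_domain n hy)]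
    exact add_mem (mul_mem hDx (hle hy)) (mul_mem (hle (D.twist_mem_adjoinTail hx)) hDy)

lemma lower_pow_mem_adjoinTail {n m : ℕ} {x : A} (hx : x ∈ adjoinTail k f (n + m)) :
    (D.lower ^ m) x ∈ adjoinTail k f n := by
  induction m generalizing x with
  | zero => exact hx
  | succ m ih => exact ih (D.lower_mem_adjoinTail hx)

lemma exists_lower_pow_mul (n : ℕ) : ∃ b : k, b ≠ 0 ∧ ∀ x ∈ adjoinTail k f (n + 1),
    (D.lower ^ n) (f n * x) - b • (f 0 * x) ∈ adjoinTail k f 1 := by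
  induction n with
  | zero => exact ⟨1, one_ne_zero, fun x _ => by simp⟩
  | succ n ih =>
    obtain ⟨b, hb, h⟩ := ih
    obtain ⟨κ, hκ, hf⟩ := D.exists_lower n
    refine ⟨κ * b, mul_ne_zero hκ hb, fun x hx => ?_⟩
    have hfx : D.lower (f (n + 1) * x) = κ • (f n * x) + D.twist (f (n + 1)) * D.lower x := by
      rw [D.lower_mul _ (D.mem_domain n) _ (D.adjoinTail_succ_le_domain _ hx), hf, smul_mul_assoc]
    have hrest : (D.lower ^ n) (D.twist (f (n + 1)) * D.lower x) ∈ adjoinTail k f 1 := by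
      refine D.lower_pow_mem_adjoinTail ?_
      rw [add_comm]
      exact mul_mem (D.twist_mem_adjoinTail (mem_adjoinTail f le_rfl)) (D.lower_mem_adjoinTail hx)
    rw [pow_succ, Module.End.mul_apply, hfx, map_add, map_smul, add_sub_right_comm, mul_smul,
      ← smul_sub]
    have hx' := adjoinTail_antitone f (Nat.le_succ _) hx
    exact add_mem ((adjoinTail k f 1).smul_mem (h x hx') κ) hrest

lemma exists_detect_lower_pow (n : ℕ) : ∃ b : k, b ≠ 0 ∧
    ∀ x ∈ adjoinTail k f (n + 1), ∀ y ∈ adjoinTail k f (n + 1),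
      D.detect ((D.lower ^ n) (f n * x + y)) = b • x := by
  obtain ⟨b, hb, h⟩ := D.exists_lower_pow_mul n
  obtain ⟨c, hc, hdet⟩ := D.exists_detect
  refine ⟨b * c, mul_ne_zero hb hc, fun x hx y hy => ?_⟩
  have hx' := D.detect_domain _ (D.adjoinTail_succ_le_domain 0 (h x hx))
  have hy' : D.detect ((D.lower ^ n) y) = 0 := by
    rw [add_comm] at hy
    exact D.detect_domain _ (D.adjoinTail_succ_le_domain 0 (D.lower_pow_mem_adjoinTail hy))
  rw [map_sub, map_smul, hdet x (D.adjoinTail_succ_le_domain n hx), sub_eq_zero, smul_smul] at hx'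
  rw [map_add, map_add, hx', hy', add_zero]

lemma mem_of_mul_add_mem {N : Submodule k A} (hlower : N ∈ D.lower.invtSubmodule)
    (hdetect : N ∈ D.detect.invtSubmodule) {L n : ℕ} {y z : A}
    (hy : y ∈ sqfreeSpan k f L (n + 1)) (hz : z ∈ sqfreeSpan k f L (n + 1))
    (hN : f n * z + y ∈ N) : z ∈ N := by
  obtain ⟨b, hb, h⟩ := D.exists_detect_lower_pow n
  have hpow : (D.lower ^ n) (f n * z + y) ∈ N := pow_invtSubmodule hlower n hN
  have hdet : b • z ∈ N :=
    h z (sqfreeSpan_le_adjoinTail f _ _ hz) y (sqfreeSpan_le_adjoinTail f _ _ hy) ▸ hdetect hpow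
  exact (N.smul_mem_iff hb).1 hdet

lemma disjoint_sqfreeSpan {N : Submodule k A} (hlower : N ∈ D.lower.invtSubmodule)
    (hdetect : N ∈ D.detect.invtSubmodule) (hone : (1 : A) ∉ N) (L n : ℕ) :
    Disjoint (sqfreeSpan k f L n) N := by
  rw [Submodule.disjoint_def]
  induction L generalizing n with
  | zero =>
    intro x hx hN
    obtain ⟨a, rfl⟩ := Submodule.mem_one.1 hx
    by_contra hne
    have ha : a ≠ 0 := fun h => hne (by rw [h, map_zero])
    rw [Algebra.algebraMap_eq_smul_one] at hN
    exact hone ((N.smul_mem_iff ha).1 hN)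
  | succ L ih =>
    intro x hx hN
    obtain ⟨y, hy, _, ⟨z, hz, rfl⟩, rfl⟩ := Submodule.mem_sup.1 hx
    rw [LinearMap.mulLeft_apply, add_comm] at hN ⊢
    obtain rfl := ih (n + 1) z hz (D.mem_of_mul_add_mem hlower hdetect hy hz hN)
    rw [mul_zero, zero_add] at hN ⊢
    exact ih (n + 1) y hy hN

include D in
lemma finrank_sqfreeSpan [Nontrivial A] (L n : ℕ) :
    Module.finrank k (sqfreeSpan k f L n) = 2 ^ L := by
  induction L generalizing n with
  | zero => rw [sqfreeSpan, Submodule.one_eq_span, finrank_span_singleton one_ne_zero, pow_zero]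
  | succ L ih =>
    set S := sqfreeSpan k f L (n + 1)
    have : FiniteDimensional k S := FiniteDimensional.of_finrank_pos (by rw [ih]; positivity)
    let ψ : S × S →ₗ[k] A := S.subtype.coprod (LinearMap.mulLeft k (f n) ∘ₗ S.subtype)
    have hrange : LinearMap.range ψ = sqfreeSpan k f (L + 1) n := by
      rw [LinearMap.range_coprod, LinearMap.range_comp, Submodule.range_subtype, sqfreeSpan]
    have hinj : Function.Injective ψ := by
      rw [injective_iff_map_eq_zero]
      rintro ⟨y, z⟩ h
      have h' : f n * z + (y : A) = 0 := (add_comm _ _).trans h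
      have hz : (z : A) = 0 := D.mem_of_mul_add_mem (N := ⊥) (Module.End.invtSubmodule.bot_mem _)
        (Module.End.invtSubmodule.bot_mem _) y.2 z.2 h'
      have hy : (y : A) = 0 := by simpa [hz] using h'
      exact Prod.ext (Subtype.ext hy) (Subtype.ext hz)
    rw [← hrange, LinearMap.finrank_range_of_inj hinj, Module.finrank_prod, ih, pow_succ, mul_two]

end LoweringData

lemma sqfreeSpan_le_pow {f : ℕ → A} {X : Submodule k A} (hX : 1 ≤ X) {c : ℕ}
    (hf : ∀ n, f n ∈ X ^ (c * (n + 1))) (L n : ℕ) :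
    sqfreeSpan k f L n ≤ X ^ (c * ((n + L) * L)) := by
  induction L generalizing n with
  | zero => rw [sqfreeSpan, mul_zero, mul_zero, pow_zero]
  | succ L ih =>
    refine sup_le ((ih (n + 1)).trans (pow_le_pow_right₀ hX ?_)) ?_
    · exact Nat.mul_le_mul_left _ (Nat.mul_le_mul (by omega) (by omega))
    · rintro _ ⟨x, hx, rfl⟩
      have := Submodule.mul_mem_mul (hf n) (ih (n + 1) hx)
      rw [← pow_add] at this
      exact pow_le_pow_right₀ hX (by nlinarith) this

end SquarefreeProducts

section GaussBinom

variable {R : Type*} [CommSemiring R]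

/-- The Gaussian binomial coefficients, defined by one of the two `q`-Pascal rules. -/
def gaussBinom (q : R) : ℕ → ℕ → R
  | _, 0 => 1
  | 0, _ + 1 => 0
  | n + 1, r + 1 => q ^ (n - r) * gaussBinom q n r + gaussBinom q n (r + 1)

@[simp] lemma gaussBinom_zero_right (q : R) (n : ℕ) : gaussBinom q n 0 = 1 := by
  cases n <;> rfl

lemma gaussBinom_eq_zero_of_lt (q : R) {n r : ℕ} (h : n < r) : gaussBinom q n r = 0 := by
  induction n generalizing r with
  | zero => obtain _ | r := r; exacts [absurd h (lt_irrefl 0), rfl]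
  | succ n ih =>
    obtain _ | r := r
    · exact absurd h (Nat.not_lt_zero _)
    · rw [gaussBinom, ih (by omega), ih (by omega), mul_zero, add_zero]

@[simp] lemma gaussBinom_self (q : R) (n : ℕ) : gaussBinom q n n = 1 := by
  induction n with
  | zero => rfl
  | succ n ih => simp [gaussBinom, ih, gaussBinom_eq_zero_of_lt q (Nat.lt_succ_self n)]

lemma gaussBinom_one_right (q : R) (n : ℕ) :
    gaussBinom q n 1 = ∑ i ∈ Finset.range n, q ^ i := by
  induction n with
  | zero => simp [gaussBinom]
  | succ n ih => simp [gaussBinom, ih, geom_sum_succ']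

lemma gaussBinom_succ_self (q : R) (n : ℕ) :
    gaussBinom q (n + 1) n = ∑ i ∈ Finset.range (n + 1), q ^ i := by
  induction n with
  | zero => simp
  | succ n ih => simp [gaussBinom, ih, gaussBinom_eq_zero_of_lt, geom_sum_succ (n := n + 1)]

end GaussBinom

section SkewDerivations

variable {k ι : Type*} [CommRing k] (P : ι → ι → k)

local notation "𝔽" => FreeAlgebra k ι
local notation "𝔵" => FreeAlgebra.ι k (X := ι)

/-- The algebra endomorphism of the free algebra rescaling the letter `s` by `P t s`; it twists
the skew derivation `skewDer P t`. -/
def sigma (t : ι) : 𝔽 →ₐ[k] 𝔽 := FreeAlgebra.lift k fun s => P t s • 𝔵 s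

local notation "σ" => sigma P

@[simp] lemma sigma_ι (t s : ι) : σ t (𝔵 s) = P t s • 𝔵 s := FreeAlgebra.lift_ι_apply _ _

lemma sigma_pow_ι (t s : ι) (n : ℕ) : (σ t ^ n) (𝔵 s) = P t s ^ n • 𝔵 s := by
  induction n with
  | zero => simp
  | succ n ih => rw [pow_succ', AlgHom.mul_apply, ih, map_smul, sigma_ι, smul_smul, ← pow_succ]

lemma sigma_comm (s t : ι) (x : 𝔽) : σ s (σ t x) = σ t (σ s x) := by
  have : (σ s).comp (σ t) = (σ t).comp (σ s) := by
    ext r; simp [smul_smul, mul_comm]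
  exact DFunLike.congr_fun this x

variable [DecidableEq ι]

/-- The representation of the free algebra by upper triangular matrices with diagonal
`sigma P t x, x` whose upper right entry is the skew derivation `skewDer P t`. -/
def skewRep (t : ι) : 𝔽 →ₐ[k] Matrix (Fin 2) (Fin 2) 𝔽 :=
  FreeAlgebra.lift k fun s => !![P t s • 𝔵 s, if s = t then 1 else 0; 0, 𝔵 s]

/-- The skew derivation of the free algebra dual to the letter `t`, with
`∂ (x * y) = ∂ x * y + sigma P t x * ∂ y`. -/
def skewDer (t : ι) : Module.End k 𝔽 :=
  Matrix.entryLinearMap k 𝔽 (0 : Fin 2) (1 : Fin 2) ∘ₗ (skewRep P t).toLinearMap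

local notation "∂" => skewDer P

lemma skewRep_entries (t : ι) (x : 𝔽) :
    skewRep P t x 0 0 = σ t x ∧ skewRep P t x 1 0 = 0 ∧ skewRep P t x 1 1 = x := by
  induction x using FreeAlgebra.induction with
  | grade0 r => simp [Matrix.algebraMap_matrix_apply]
  | grade1 s => simp [skewRep]
  | mul x y hx hy => simp [Matrix.mul_apply, Fin.sum_univ_two, hx, hy]
  | add x y hx hy => simp [hx, hy]

lemma skewDer_mul (t : ι) (x y : 𝔽) : ∂ t (x * y) = ∂ t x * y + σ t x * ∂ t y := by
  have hx := skewRep_entries P t x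
  have hy := skewRep_entries P t y
  simp [skewDer, Matrix.mul_apply, Fin.sum_univ_two, hx, hy, add_comm]

@[simp] lemma skewDer_one (t : ι) : ∂ t 1 = 0 := by simp [skewDer]

@[simp] lemma skewDer_algebraMap (t : ι) (r : k) : ∂ t (algebraMap k 𝔽 r) = 0 := by
  rw [Algebra.algebraMap_eq_smul_one, map_smul, skewDer_one, smul_zero]

lemma skewDer_ι (t s : ι) : ∂ t (𝔵 s) = if s = t then 1 else 0 := by simp [skewDer, skewRep]

lemma skewDer_sigma (t s : ι) (x : 𝔽) : ∂ t (σ s x) = P s t • σ s (∂ t x) := by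
  induction x using FreeAlgebra.induction with
  | grade0 r => simp
  | grade1 r =>
    simp only [sigma_ι, map_smul, skewDer_ι]
    split_ifs with h <;> simp [h]
  | mul x y hx hy =>
    rw [map_mul, skewDer_mul, hx, hy, skewDer_mul, map_add, map_mul, map_mul, sigma_comm P t s,
      smul_add, smul_mul_assoc, mul_smul_comm]
  | add x y hx hy => simp only [map_add, hx, hy, smul_add]

lemma skewDer_sigma_pow (t s : ι) (n : ℕ) (x : 𝔽) :
    ∂ t ((σ s ^ n) x) = P s t ^ n • (σ s ^ n) (∂ t x) := by
  induction n with
  | zero => simp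
  | succ n ih =>
    rw [pow_succ', AlgHom.mul_apply, skewDer_sigma, ih, map_smul, smul_smul, AlgHom.mul_apply,
      ← pow_succ']

lemma skewDer_pow_mul (v : ι) (n : ℕ) (x y : 𝔽) :
    (∂ v ^ n) (x * y) = ∑ r ∈ Finset.range (n + 1), gaussBinom (P v v) n r •
      ((σ v ^ (n - r)) ((∂ v ^ r) x) * (∂ v ^ (n - r)) y) := by
  induction n with
  | zero => simp
  | succ n ih =>
    let T (r : ℕ) : 𝔽 := (σ v ^ (n + 1 - r)) ((∂ v ^ r) x) * (∂ v ^ (n + 1 - r)) y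
    have hstep : ∀ r ∈ Finset.range (n + 1),
        ∂ v (gaussBinom (P v v) n r • ((σ v ^ (n - r)) ((∂ v ^ r) x) * (∂ v ^ (n - r)) y))
        = (P v v ^ (n - r) * gaussBinom (P v v) n r) • T (r + 1)
          + gaussBinom (P v v) n r • T r := by
      intro r hr
      have hr' : r ≤ n := Nat.lt_succ_iff.1 (Finset.mem_range.1 hr)
      simp only [T]
      rw [Nat.succ_sub_succ, Nat.succ_sub hr', map_smul, skewDer_mul, skewDer_sigma_pow,
        pow_succ' (∂ v), pow_succ' (σ v), pow_succ' (∂ v), Module.End.mul_apply,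
        Module.End.mul_apply, AlgHom.mul_apply, smul_mul_assoc, smul_add, smul_smul, mul_comm]
    have hlast : ∑ r ∈ Finset.range (n + 1), gaussBinom (P v v) n r • T r
        = ∑ r ∈ Finset.range (n + 1), gaussBinom (P v v) n (r + 1) • T (r + 1) + T 0 := by
      rw [Finset.sum_range_succ', Finset.sum_range_succ _ n,
        gaussBinom_eq_zero_of_lt _ (Nat.lt_succ_self n), zero_smul, add_zero,
        gaussBinom_zero_right, one_smul]
    rw [pow_succ', Module.End.mul_apply, ih, map_sum, Finset.sum_congr rfl hstep,
      Finset.sum_add_distrib, hlast, ← add_assoc, ← Finset.sum_add_distrib,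
      Finset.sum_range_succ' _ (n + 1), gaussBinom_zero_right, one_smul]
    simp only [gaussBinom, add_smul, T]

end SkewDerivations

section RootVectors

variable {k ι : Type*} [CommRing k] (P : ι → ι → k) (u v : ι)

local notation "𝔽" => FreeAlgebra k ι
local notation "𝔵" => FreeAlgebra.ι k (X := ι)
local notation "σ" => sigma P

/-- The iterated braided commutators `(ad x_v) ^ n (x_u)`. -/
def rootVec : ℕ → 𝔽
  | 0 => 𝔵 u
  | n + 1 => 𝔵 v * rootVec n - (P u v * P v v ^ n) • (rootVec n * 𝔵 v)

local notation "𝔢" => rootVec P u v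

/-- The coefficient `[n + 1]_q (1 - ω q ^ n)` by which `∂_v` maps `(ad x_v) ^ (n + 1) (x_u)` to
`(ad x_v) ^ n (x_u)`, where `q = q_vv` and `ω = q_uv q_vu`. -/
def strCoef (q ω : k) (n : ℕ) : k := (∑ i ∈ Finset.range (n + 1), q ^ i) * (1 - ω * q ^ n)

local notation "ℓ" => strCoef (P v v) (P u v * P v u)

/-- The value at `(u + m v, u + n v)` of the bicharacter with matrix `P`. -/
def bichar (m n : ℕ) : k := P u u * P u v ^ n * (P v u * P v v ^ n) ^ m

local notation "χ" => bichar P u v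

/-- The iterated braided commutators of `(ad x_v) ^ (n + 1) (x_u)` with `(ad x_v) ^ n (x_u)`. -/
def stringVec (n : ℕ) : ℕ → 𝔽
  | 0 => 𝔢 n
  | j + 1 => 𝔢 (n + 1) * stringVec n j
      - (χ n (n + 1) * χ (n + 1) (n + 1) ^ j) • (stringVec n j * 𝔢 (n + 1))

lemma strCoef_succ (q ω : k) (n : ℕ) :
    strCoef q ω (n + 1) = 1 - ω * q ^ (2 * n + 2) + q * strCoef q ω n := by
  have h1 : ∑ i ∈ Finset.range (n + 2), q ^ i = _ := geom_sum_succ'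
  have h2 : ∑ i ∈ Finset.range (n + 2), q ^ i = _ := geom_sum_succ
  simp only [strCoef]
  linear_combination h2 - ω * q ^ (n + 1) * h1

variable {P u v}

lemma map_rootVec (φ : 𝔽 →ₐ[k] 𝔽) {a b : k} (hu : φ (𝔵 u) = a • 𝔵 u) (hv : φ (𝔵 v) = b • 𝔵 v)
    (n : ℕ) : φ (𝔢 n) = (a * b ^ n) • 𝔢 n := by
  induction n with
  | zero => simpa [rootVec] using hu
  | succ n ih =>
    rw [rootVec, map_sub, map_smul, map_mul, map_mul, ih, hv]
    simp only [smul_mul_assoc, mul_smul_comm, smul_sub, smul_smul]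
    congr 2 <;> ring

lemma map_stringVec (φ : 𝔽 →ₐ[k] 𝔽) {a b : k} (hu : φ (𝔵 u) = a • 𝔵 u)
    (hv : φ (𝔵 v) = b • 𝔵 v) (n j : ℕ) :
    φ (stringVec P u v n j) = (a * b ^ n * (a * b ^ (n + 1)) ^ j) • stringVec P u v n j := by
  induction j with
  | zero => simpa [stringVec] using map_rootVec φ hu hv n
  | succ j ih =>
    rw [stringVec, map_sub, map_smul, map_mul, map_mul, ih, map_rootVec φ hu hv]
    simp only [smul_mul_assoc, mul_smul_comm, smul_sub, smul_smul]
    congr 2 <;> ring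

lemma sigma_sigma_pow_stringVec (m n j : ℕ) : σ u ((σ v ^ m) (stringVec P u v n j)) =
    (χ m n * χ m (n + 1) ^ j) • stringVec P u v n j := by
  have h := map_stringVec (P := P) (u := u) (v := v) ((σ u).comp (σ v ^ m))
    (a := P v u ^ m * P u u) (b := P v v ^ m * P u v)
    (by rw [AlgHom.comp_apply, sigma_pow_ι, map_smul, sigma_ι, smul_smul])
    (by rw [AlgHom.comp_apply, sigma_pow_ι, map_smul, sigma_ι, smul_smul]) n j
  rw [AlgHom.comp_apply] at h
  rw [h]
  congr 1
  simp only [bichar]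
  ring

lemma sigma_sigma_pow_rootVec (m n : ℕ) : σ u ((σ v ^ m) (𝔢 n)) = χ m n • 𝔢 n := by
  simpa [stringVec] using sigma_sigma_pow_stringVec (P := P) (u := u) (v := v) m n 0

lemma rootVec_mem_pow {X : Submodule k 𝔽} (hX : ∀ s, 𝔵 s ∈ X) (n : ℕ) : 𝔢 n ∈ X ^ (n + 1) := by
  induction n with
  | zero => simpa [rootVec] using hX u
  | succ n ih =>
    refine sub_mem ?_ (Submodule.smul_mem _ _ ?_)
    · rw [pow_succ']; exact Submodule.mul_mem_mul (hX v) ih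
    · rw [pow_succ]; exact Submodule.mul_mem_mul ih (hX v)

lemma stringVec_mem_pow {X : Submodule k 𝔽} (hone : 1 ≤ X) (hX : ∀ s, 𝔵 s ∈ X) (n j : ℕ) :
    stringVec P u v n j ∈ X ^ ((n + 2) * (j + 1)) := by
  induction j with
  | zero => exact pow_le_pow_right₀ hone (by omega) (rootVec_mem_pow hX n)
  | succ j ih =>
    have hexp : (n + 2) * (j + 1 + 1) = (n + 2) + (n + 2) * (j + 1) := by ring
    refine sub_mem ?_ (Submodule.smul_mem _ _ ?_)
    · rw [hexp, pow_add]; exact Submodule.mul_mem_mul (rootVec_mem_pow hX _) ih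
    · rw [hexp, add_comm, pow_add]; exact Submodule.mul_mem_mul ih (rootVec_mem_pow hX _)

variable [DecidableEq ι] (huv : u ≠ v)

local notation "∂" => skewDer P

include huv

lemma skewDer_left_rootVec_succ (n : ℕ) : ∂ u (𝔢 (n + 1)) = 0 := by
  induction n with
  | zero => simp [rootVec, skewDer_mul, skewDer_ι, huv.symm]
  | succ n ih =>
    rw [rootVec, map_sub, map_smul, skewDer_mul, skewDer_mul, ih]
    simp [skewDer_ι, huv.symm]

lemma skewDer_rootVec_zero : ∂ v (𝔢 0) = 0 := by
  simp [rootVec, skewDer_ι, huv]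

lemma skewDer_rootVec_succ (n : ℕ) : ∂ v (𝔢 (n + 1)) = ℓ n • 𝔢 n := by
  have hσ (n : ℕ) : σ v (𝔢 n) = (P v u * P v v ^ n) • 𝔢 n :=
    map_rootVec _ (sigma_ι ..) (sigma_ι ..) n
  have hrec (n : ℕ) : ∂ v (𝔢 (n + 1)) = 𝔢 n + P v v • (𝔵 v * ∂ v (𝔢 n))
      - (P u v * P v v ^ n) • (∂ v (𝔢 n) * 𝔵 v)
      - ((P u v * P v u) * P v v ^ (2 * n)) • 𝔢 n := by
    rw [rootVec, map_sub, map_smul, skewDer_mul, skewDer_mul, hσ, sigma_ι]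
    simp only [skewDer_ι, if_true, one_mul, mul_one, smul_add, smul_smul, smul_mul_assoc,
      sub_sub]
    congr 3
    ring
  induction n with
  | zero =>
    rw [hrec, skewDer_rootVec_zero huv]
    simp [strCoef, sub_smul]
  | succ n ih =>
    have hmain : (P v v * ℓ n) • 𝔢 (n + 1) = P v v • (𝔵 v * ℓ n • 𝔢 n)
        - (P u v * P v v ^ (n + 1)) • (ℓ n • 𝔢 n * 𝔵 v) := by
      rw [rootVec]
      simp only [smul_sub, mul_smul_comm, smul_mul_assoc, smul_smul]
      congr 2
      ring
    rw [hrec, ih, strCoef_succ, add_smul, sub_smul, one_smul, hmain, mul_add, mul_one]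
    abel

lemma skewDer_pow_rootVec_add (r n : ℕ) :
    (∂ v ^ r) (𝔢 (n + r)) = (∏ i ∈ Finset.range r, ℓ (n + i)) • 𝔢 n := by
  induction r with
  | zero => simp
  | succ r ih =>
    rw [pow_succ, Module.End.mul_apply, ← add_assoc, skewDer_rootVec_succ huv, map_smul, ih,
      smul_smul, Finset.prod_range_succ, mul_comm]

lemma skewDer_pow_rootVec_self (n : ℕ) :
    (∂ v ^ n) (𝔢 n) = (∏ i ∈ Finset.range n, ℓ i) • 𝔢 0 := by
  simpa using skewDer_pow_rootVec_add (P := P) huv n 0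

lemma skewDer_pow_rootVec_of_lt {r n : ℕ} (h : n < r) : (∂ v ^ r) (𝔢 n) = 0 := by
  obtain ⟨s, rfl⟩ := Nat.exists_eq_add_of_lt h
  rw [show n + s + 1 = s + (1 + n) by ring, pow_add, pow_add, pow_one, Module.End.mul_apply,
    Module.End.mul_apply, skewDer_pow_rootVec_self huv, map_smul, skewDer_rootVec_zero huv,
    smul_zero, map_zero]

end RootVectors

section RootDerivations

variable {k ι : Type*} [CommRing k] [DecidableEq ι] (P : ι → ι → k) (u v : ι)

local notation "𝔽" => FreeAlgebra k ι
local notation "σ" => sigma P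
local notation "∂" => skewDer P
local notation "𝔢" => rootVec P u v
local notation "ℓ" => strCoef (P v v) (P u v * P v u)
local notation "χ" => bichar P u v

/-- The operator `∂_u ∂_v ^ n`, dual to the degree `u + n v`. -/
def rootDer (n : ℕ) : Module.End k 𝔽 := ∂ u * ∂ v ^ n

local notation "𝔡" => rootDer P u v

variable {P u v}

lemma rootDer_mul (n : ℕ) (x y : 𝔽) : 𝔡 n (x * y) =
    ∑ r ∈ Finset.range (n + 1), (gaussBinom (P v v) n r * P v u ^ (n - r)) •
      ((σ v ^ (n - r)) (𝔡 r x) * (∂ v ^ (n - r)) y)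
    + ∑ r ∈ Finset.range (n + 1), gaussBinom (P v v) n r •
      (σ u ((σ v ^ (n - r)) ((∂ v ^ r) x)) * 𝔡 (n - r) y) := by
  simp only [rootDer, Module.End.mul_apply]
  rw [skewDer_pow_mul, map_sum, ← Finset.sum_add_distrib]
  refine Finset.sum_congr rfl fun r _ => ?_
  rw [map_smul, skewDer_mul, skewDer_sigma_pow, smul_add, smul_mul_assoc, smul_smul]

lemma rootDer_algebraMap (n : ℕ) (r : k) : 𝔡 n (algebraMap k 𝔽 r) = 0 := by
  rw [rootDer, Module.End.mul_apply]
  cases n with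
  | zero => simp
  | succ n => rw [pow_succ, Module.End.mul_apply, skewDer_algebraMap, map_zero, map_zero]

variable (P u v) in
/-- The elements killed by `∂_u ∂_v ^ i` for all `i ≤ n`. -/
def rootDerKer (n : ℕ) : Subalgebra k 𝔽 where
  carrier := {z | ∀ i ≤ n, 𝔡 i z = 0}
  mul_mem' := fun {x y} hx hy i hi => by
    rw [rootDer_mul, Finset.sum_eq_zero, Finset.sum_eq_zero, add_zero]
    · intro r _
      rw [hy _ ((Nat.sub_le _ _).trans hi), mul_zero, smul_zero]
    · intro r hr
      rw [hx r ((Finset.mem_range_succ_iff.1 hr).trans hi), map_zero, zero_mul, smul_zero]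
  add_mem' := fun {x y} hx hy i hi => by rw [map_add, hx i hi, hy i hi, add_zero]
  algebraMap_mem' := fun r i _ => rootDer_algebraMap i r

lemma rootDer_mul_of_mem {n : ℕ} {x y : 𝔽} (hx : x ∈ rootDerKer P u v n)
    (hy : y ∈ rootDerKer P u v n) : 𝔡 (n + 1) (x * y) =
      𝔡 (n + 1) x * y + σ u ((σ v ^ (n + 1)) x) * 𝔡 (n + 1) y := by
  rw [rootDer_mul, Finset.sum_eq_single (n + 1), Finset.sum_eq_single 0]
  · simp
  · intro r _ hr
    rw [hy _ (by omega), mul_zero, smul_zero]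
  · simp
  · intro r hr hrn
    rw [hx r (by have := Finset.mem_range.1 hr; omega), map_zero, zero_mul, smul_zero]
  · simp

variable (huv : u ≠ v)
include huv

lemma rootDer_rootVec (r n : ℕ) :
    𝔡 r (𝔢 n) = if r = n then algebraMap k 𝔽 (∏ i ∈ Finset.range n, ℓ i) else 0 := by
  rw [rootDer, Module.End.mul_apply]
  rcases lt_trichotomy r n with h | rfl | h
  · obtain ⟨s, rfl⟩ := Nat.exists_eq_add_of_lt h
    rw [if_neg h.ne, show r + s + 1 = s + 1 + r by ring, skewDer_pow_rootVec_add huv, map_smul,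
      skewDer_left_rootVec_succ huv, smul_zero]
  · rw [if_pos rfl, skewDer_pow_rootVec_self huv, map_smul, rootVec, skewDer_ι, if_pos rfl,
      ← Algebra.algebraMap_eq_smul_one]
  · rw [if_neg h.ne', skewDer_pow_rootVec_of_lt huv h, map_zero]

lemma rootVec_mem_rootDerKer (n : ℕ) : 𝔢 (n + 1) ∈ rootDerKer P u v n := fun i hi => by
  rw [rootDer_rootVec huv, if_neg (by omega)]

lemma rootDer_rootVec_mul (n a : ℕ) (y : 𝔽) : 𝔡 n (𝔢 a * y) =
    (gaussBinom (P v v) n a * P v u ^ (n - a) * ∏ i ∈ Finset.range a, ℓ i) •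
      (∂ v ^ (n - a)) y
    + ∑ r ∈ Finset.range (n + 1), gaussBinom (P v v) n r •
      (σ u ((σ v ^ (n - r)) ((∂ v ^ r) (𝔢 a))) * 𝔡 (n - r) y) := by
  rw [rootDer_mul, Finset.sum_eq_single a]
  · rw [rootDer_rootVec huv, if_pos rfl, AlgHom.commutes, ← Algebra.smul_def, smul_smul]
  · intro r _ hr
    rw [rootDer_rootVec huv, if_neg hr, map_zero, zero_mul, smul_zero]
  · intro ha
    rw [gaussBinom_eq_zero_of_lt _ (by simpa using ha), zero_mul, zero_smul]

lemma rootDer_rootVec_mul_rootVec (n a b : ℕ) : 𝔡 n (𝔢 a * 𝔢 b) =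
    (gaussBinom (P v v) n a * P v u ^ (n - a) * ∏ i ∈ Finset.range a, ℓ i) •
      (∂ v ^ (n - a)) (𝔢 b)
    + if b ≤ n then (gaussBinom (P v v) n (n - b) * ∏ i ∈ Finset.range b, ℓ i) •
        σ u ((σ v ^ b) ((∂ v ^ (n - b)) (𝔢 a))) else 0 := by
  rw [rootDer_rootVec_mul huv]
  congr 1
  split_ifs with hb
  · rw [Finset.sum_eq_single (n - b)]
    · rw [Nat.sub_sub_self hb, rootDer_rootVec huv, if_pos rfl, ← Algebra.commutes,
        ← Algebra.smul_def, smul_smul]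
    · intro r hr hrb
      rw [rootDer_rootVec huv, if_neg (by have := Finset.mem_range.1 hr; omega), mul_zero,
        smul_zero]
    · exact fun h => absurd (Finset.mem_range_succ_iff.2 (Nat.sub_le n b)) h
  · refine Finset.sum_eq_zero fun r _ => ?_
    rw [rootDer_rootVec huv, if_neg (by omega), mul_zero, smul_zero]

lemma rootDer_rootVec_mul_of_mem {n : ℕ} {z : 𝔽} (hz : z ∈ rootDerKer P u v n) :
    𝔡 n (𝔢 n * z) = (∏ i ∈ Finset.range n, ℓ i) • z := by
  rw [rootDer_rootVec_mul huv, Finset.sum_eq_zero]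
  · simp
  · intro r _
    rw [hz _ (Nat.sub_le _ _), mul_zero, smul_zero]

lemma stringVec_one_mem_rootDerKer (n : ℕ) : stringVec P u v n 1 ∈ rootDerKer P u v n := by
  intro i hi
  rw [stringVec, stringVec, map_sub, map_smul, rootDer_rootVec_mul_rootVec huv,
    rootDer_rootVec_mul_rootVec huv, gaussBinom_eq_zero_of_lt _ (by omega : i < n + 1),
    if_neg (by omega : ¬ n + 1 ≤ i), zero_mul, zero_mul, zero_smul, zero_add, add_zero]
  rcases hi.lt_or_eq with hi | rfl
  · rw [if_neg (by omega), gaussBinom_eq_zero_of_lt _ hi, zero_mul, zero_mul, zero_smul, smul_zero,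
      sub_zero]
  · simp only [le_refl, if_true, Nat.sub_self, gaussBinom_zero_right, gaussBinom_self, pow_zero,
      one_mul, Module.End.one_apply, pow_zero, sigma_sigma_pow_rootVec, smul_smul, mul_comm,
      sub_self]

lemma stringVec_succ_mem_rootDerKer (n j : ℕ) :
    stringVec P u v n (j + 1) ∈ rootDerKer P u v n := by
  induction j with
  | zero => exact stringVec_one_mem_rootDerKer huv n
  | succ j ih =>
    rw [stringVec]
    exact sub_mem (mul_mem (rootVec_mem_rootDerKer huv n) ih)
      (Subalgebra.smul_mem _ (mul_mem ih (rootVec_mem_rootDerKer huv n)) _)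

variable {n : ℕ} (hiso : ∀ m, bichar P u v m (n + 1) * bichar P u v (n + 1) m = 1)
include hiso

lemma rootDer_stringVec_one : 𝔡 (n + 1) (stringVec P u v n 1) =
    ((∏ i ∈ Finset.range (n + 1), ℓ i) * χ n n * ℓ n) • 𝔢 n := by
  have hχ : χ n (n + 1) = χ n n * (P u v * P v v ^ n) := by
    simp only [bichar]; ring
  have h₁ : 𝔡 (n + 1) (𝔢 (n + 1) * 𝔢 n) = ((∏ i ∈ Finset.range (n + 1), ℓ i) *
      (1 + (∑ i ∈ Finset.range (n + 1), P v v ^ i) * χ n n)) • 𝔢 n := by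
    rw [rootDer_rootVec_mul_rootVec huv, if_pos (Nat.le_succ n), Nat.sub_self,
      Nat.add_sub_cancel_left, pow_one, skewDer_rootVec_succ huv, map_smul, map_smul,
      sigma_sigma_pow_rootVec, gaussBinom_one_right, gaussBinom_self, pow_zero, pow_zero,
      Module.End.one_apply, smul_smul, smul_smul, ← add_smul, Finset.prod_range_succ]
    congr 1
    ring
  have h₂ : 𝔡 (n + 1) (𝔢 n * 𝔢 (n + 1)) = ((∏ i ∈ Finset.range (n + 1), ℓ i) *
      ((∑ i ∈ Finset.range (n + 1), P v v ^ i) * P v u + χ (n + 1) n)) • 𝔢 n := by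
    rw [rootDer_rootVec_mul_rootVec huv, if_pos le_rfl, Nat.sub_self,
      Nat.add_sub_cancel_left, pow_one, pow_one, skewDer_rootVec_succ huv, gaussBinom_succ_self,
      gaussBinom_zero_right, pow_zero, Module.End.one_apply, sigma_sigma_pow_rootVec,
      smul_smul, smul_smul, ← add_smul, Finset.prod_range_succ]
    congr 1
    ring
  rw [stringVec, stringVec, map_sub, map_smul, h₁, h₂, pow_zero, mul_one, smul_smul, ← sub_smul,
    strCoef]
  congr 1
  linear_combination (∏ i ∈ Finset.range (n + 1), ℓ i) *
    (-hiso n - (∑ i ∈ Finset.range (n + 1), P v v ^ i) * P v u * hχ)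

lemma rootDer_stringVec_succ (j : ℕ) : 𝔡 (n + 1) (stringVec P u v n (j + 1)) =
    (χ (n + 1) (n + 1) ^ j * ((∏ i ∈ Finset.range (n + 1), ℓ i) * χ n n * ℓ n)) •
      stringVec P u v n j := by
  induction j with
  | zero => rw [zero_add, rootDer_stringVec_one huv hiso, pow_zero, one_mul, stringVec]
  | succ j ih =>
    have hd := rootVec_mem_rootDerKer (P := P) huv n
    have hj := stringVec_succ_mem_rootDerKer (P := P) huv n j
    have hχ : (χ n (n + 1) * χ (n + 1) (n + 1) ^ (j + 1)) *
        (χ (n + 1) n * χ (n + 1) (n + 1) ^ (j + 1)) = 1 := by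
      rw [mul_mul_mul_comm, hiso, one_mul, ← mul_pow, hiso, one_pow]
    rw [stringVec, map_sub, map_smul, rootDer_mul_of_mem hd hj, rootDer_mul_of_mem hj hd, ih,
      sigma_sigma_pow_rootVec, sigma_sigma_pow_stringVec, rootDer_rootVec huv, if_pos rfl, smul_add,
      smul_mul_assoc _ (stringVec P u v n (j + 1)), smul_smul, hχ, one_smul,
      ← Algebra.commutes, add_comm, add_sub_add_right_eq_sub]
    conv_rhs => rw [stringVec]
    simp only [smul_sub, smul_mul_assoc, mul_smul_comm, smul_smul]
    congr 2 <;> ring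

end RootDerivations

section LoweringData

variable {k ι : Type*} [Field k] [DecidableEq ι] {P : ι → ι → k} {u v : ι} (huv : u ≠ v)

local notation "ℓ" => strCoef (P v v) (P u v * P v u)
local notation "χ" => bichar P u v

/-- Lowering by `∂_v` along an infinite string of root vectors. -/
def LoweringData.ofString (h : ∀ n, ℓ n ≠ 0) : LoweringData k (rootVec P u v) where
  domain := rootDerKer P u v 0
  twist := sigma P v
  lower := skewDer P v
  detect := rootDer P u v 0
  mem_domain n i hi := rootVec_mem_rootDerKer huv n i (hi.trans n.zero_le)
  exists_twist n := ⟨_, map_rootVec _ (sigma_ι ..) (sigma_ι ..) n⟩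
  lower_one := skewDer_one P v
  lower_mul _ _ _ _ := skewDer_mul P v _ _
  exists_lower n := ⟨_, h n, skewDer_rootVec_succ huv n⟩
  detect_domain _ hz := hz 0 le_rfl
  exists_detect := ⟨1, one_ne_zero, fun _ hz => by
    simpa using rootDer_rootVec_mul_of_mem huv hz⟩

/-- Lowering by `∂_u ∂_v ^ (n + 1)` along the string in the direction of the isotropic root
`u + (n + 1) v` that starts at `u + n v`. -/
def LoweringData.ofIsotropic (hP : ∀ s t, P s t ≠ 0) {n : ℕ}
    (hiso : ∀ m, χ m (n + 1) * χ (n + 1) m = 1) (h : ∀ j ≤ n, ℓ j ≠ 0) :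
    LoweringData k (stringVec P u v n) where
  domain := rootDerKer P u v n
  twist := (sigma P u).comp (sigma P v ^ (n + 1))
  lower := rootDer P u v (n + 1)
  detect := rootDer P u v n
  mem_domain := stringVec_succ_mem_rootDerKer huv n
  exists_twist j := ⟨_, sigma_sigma_pow_stringVec (n + 1) n j⟩
  lower_one := by simpa using rootDer_algebraMap (P := P) (u := u) (v := v) (n + 1) 1
  lower_mul _ hx _ hy := rootDer_mul_of_mem hx hy
  exists_lower j := by
    have hprod : ∏ i ∈ Finset.range (n + 1), ℓ i ≠ 0 :=
      Finset.prod_ne_zero_iff.2 fun i hi => h i (Finset.mem_range_succ_iff.1 hi)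
    exact ⟨_, by simp [hprod, bichar, hP, h n le_rfl], rootDer_stringVec_succ huv hiso j⟩
  detect_domain _ hz := hz n le_rfl
  exists_detect := ⟨_, Finset.prod_ne_zero_iff.2 fun i hi => h i (Finset.mem_range.1 hi).le,
    fun _ hz => rootDer_rootVec_mul_of_mem huv hz⟩

omit [DecidableEq ι] in
lemma bichar_mul_bichar_eq_one {n : ℕ}
    (h₁ : P u u ^ 2 * (P u v * P v u) ^ (n + 1) = 1)
    (h₂ : P u v * P v u * P v v ^ (2 * (n + 1)) = 1) (m : ℕ) :
    χ m (n + 1) * χ (n + 1) m = 1 := by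
  calc χ m (n + 1) * χ (n + 1) m = (P u u ^ 2 * (P u v * P v u) ^ (n + 1))
        * (P u v * P v u * P v v ^ (2 * (n + 1))) ^ m := by simp only [bichar]; ring
    _ = 1 := by rw [h₁, h₂, one_pow, one_mul]

end LoweringData

section Realization

variable {k ι M : Type*} [Field k] [AddCommGroup M] [Module k M]

/-- Stretched exponential growth of the space generated from `vac` by the operators in `𝓐`:
some finite-dimensional space of operators produces, within about `L ^ 2` steps, a space of
dimension at least `2 ^ L`. -/
def HasStretchedGrowth (𝓐 : Subalgebra k (Module.End k M)) (vac : M) : Prop :=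
  ∃ X : Submodule k (Module.End k M), X.FG ∧ X ≤ Subalgebra.toSubmodule 𝓐 ∧
    ∃ C, ∀ L, 2 ^ L ≤ Module.finrank k ((X ^ (C * (L * L))).map (LinearMap.applyₗ vac))

/-- The action of the free algebra on the vector `vac` through operators `T t` for the letters. -/
def act (T : ι → Module.End k M) (vac : M) : FreeAlgebra k ι →ₗ[k] M :=
  LinearMap.applyₗ vac ∘ₗ (FreeAlgebra.lift k T).toLinearMap

lemma act_one (T : ι → Module.End k M) (vac : M) : act T vac 1 = vac := by simp [act]

lemma act_ι_mul (T : ι → Module.End k M) (vac : M) (t : ι) (x : FreeAlgebra k ι) :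
    act T vac (FreeAlgebra.ι k t * x) = T t (act T vac x) := by simp [act]

lemma hasStretchedGrowth_of_loweringData [Finite ι] {𝓐 : Subalgebra k (Module.End k M)}
    {T : ι → Module.End k M} (hT : ∀ t, T t ∈ 𝓐) {vac : M} (hvac : vac ≠ 0)
    {f : ℕ → FreeAlgebra k ι} (D : LoweringData k f)
    (hlower : LinearMap.ker (act T vac) ∈ D.lower.invtSubmodule)
    (hdetect : LinearMap.ker (act T vac) ∈ D.detect.invtSubmodule) {c : ℕ}
    (hf : ∀ X : Submodule k (FreeAlgebra k ι), 1 ≤ X → (∀ s, FreeAlgebra.ι k s ∈ X) →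
      ∀ n, f n ∈ X ^ (c * (n + 1))) : HasStretchedGrowth 𝓐 vac := by
  set Y : Submodule k (FreeAlgebra k ι) :=
    Submodule.span k (insert 1 (Set.range (FreeAlgebra.ι k))) with hY
  have hYfg : Y.FG := Submodule.fg_span ((Set.finite_range _).insert 1)
  have hone : 1 ≤ Y := Submodule.one_le.2 (Submodule.subset_span (Set.mem_insert _ _))
  have hι (s : ι) : FreeAlgebra.ι k s ∈ Y :=
    Submodule.subset_span (Set.mem_insert_of_mem _ ⟨s, rfl⟩)
  refine ⟨Y.map (FreeAlgebra.lift k T).toLinearMap, hYfg.map _, ?_, c, fun L => ?_⟩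
  · rw [hY, Submodule.map_span_le]
    rintro _ (rfl | ⟨t, rfl⟩)
    · simp
    · simpa using hT t
  · have hdisj : Disjoint (sqfreeSpan k f L 0) (LinearMap.ker (act T vac)) :=
      D.disjoint_sqfreeSpan hlower hdetect (by rwa [LinearMap.mem_ker, act_one]) L 0
    have hle : sqfreeSpan k f L 0 ≤ Y ^ (c * (L * L)) := by
      simpa using sqfreeSpan_le_pow hone (hf Y hone hι) L 0
    have : FiniteDimensional k ((Y ^ (c * (L * L))).map (act T vac)) :=
      Module.Finite.iff_fg.2 ((hYfg.pow _).map _)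
    rw [← Submodule.map_pow, ← Submodule.map_comp]
    calc 2 ^ L = Module.finrank k (sqfreeSpan k f L 0) := (D.finrank_sqfreeSpan L 0).symm
      _ = Module.finrank k ((sqfreeSpan k f L 0).map (act T vac)) := by
        rw [← LinearMap.range_domRestrict, LinearMap.finrank_range_of_inj
          ((LinearMap.injective_domRestrict_iff).2 hdisj)]
      _ ≤ Module.finrank k ((Y ^ (c * (L * L))).map (act T vac)) :=
        Submodule.finrank_mono (Submodule.map_mono hle)

variable [DecidableEq ι]

/-- Operators `raise t` acting on a vector `vac`, together with operators `lower s` that satisfy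
the commutation rules of the skew derivations for `P` on a space stable under the raising
operators.  The words in the `raise t` applied to `vac` then span a quotient of the free algebra
to which the skew derivations descend. -/
structure Realization (P : ι → ι → k) (raise lower : ι → Module.End k M) (vac : M) where
  carrier : Submodule k M
  vac_mem : vac ∈ carrier
  raise_mem : ∀ t, ∀ m ∈ carrier, raise t m ∈ carrier
  lower_raise : ∀ s t, ∀ m ∈ carrier,
    lower s (raise t m) = (if t = s then m else 0) + P s t • raise t (lower s m)
  lower_vac : ∀ s, lower s vac = 0
  vac_ne : vac ≠ 0

namespace Realization

variable {P : ι → ι → k} {raise lower : ι → Module.End k M} {vac : M}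
  (A : Realization P raise lower vac)
include A

lemma act_mul_skewDer {x y : FreeAlgebra k ι} (hy : act raise vac y ∈ A.carrier ∧
      ∀ s, act raise vac (skewDer P s y) = lower s (act raise vac y)) :
    act raise vac (x * y) ∈ A.carrier ∧
      ∀ s, act raise vac (skewDer P s (x * y)) = lower s (act raise vac (x * y)) := by
  induction x using FreeAlgebra.induction generalizing y with
  | grade0 r =>
    rw [← Algebra.smul_def, map_smul]
    exact ⟨A.carrier.smul_mem _ hy.1, fun s => by rw [map_smul, map_smul, map_smul, hy.2]⟩
  | grade1 t =>
    refine ⟨act_ι_mul raise vac t y ▸ A.raise_mem t _ hy.1, fun s => ?_⟩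
    rw [act_ι_mul, A.lower_raise s t _ hy.1, skewDer_mul, skewDer_ι, sigma_ι, map_add,
      smul_mul_assoc, map_smul, act_ι_mul, hy.2]
    split_ifs <;> simp
  | mul x x' hx hx' => rw [mul_assoc]; exact hx (hx' hy)
  | add x x' hx hx' =>
    rw [add_mul, map_add]
    refine ⟨add_mem (hx hy).1 (hx' hy).1, fun s => ?_⟩
    rw [map_add, map_add, map_add, (hx hy).2, (hx' hy).2]

lemma act_skewDer (s : ι) (x : FreeAlgebra k ι) :
    act raise vac (skewDer P s x) = lower s (act raise vac x) := by
  have h := A.act_mul_skewDer (x := x) (y := 1) ⟨by rw [act_one]; exact A.vac_mem, fun s => by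
    rw [act_one, A.lower_vac, skewDer_one, map_zero]⟩
  simpa only [mul_one] using h.2 s

lemma ker_act_mem_invtSubmodule (s : ι) :
    LinearMap.ker (act raise vac) ∈ (skewDer P s).invtSubmodule := fun x hx => by
  rw [LinearMap.mem_ker] at hx
  rw [Submodule.mem_comap, LinearMap.mem_ker, A.act_skewDer, hx, map_zero]

lemma ker_act_mem_invtSubmodule_rootDer (u v : ι) (n : ℕ) :
    LinearMap.ker (act raise vac) ∈ (rootDer P u v n).invtSubmodule := fun _ hx =>
  A.ker_act_mem_invtSubmodule u (pow_invtSubmodule (A.ker_act_mem_invtSubmodule v) n hx)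

variable [Finite ι] {𝓐 : Subalgebra k (Module.End k M)} (hraise : ∀ t, raise t ∈ 𝓐)
  {u v : ι} (huv : u ≠ v)
include hraise huv

lemma hasStretchedGrowth_of_string (h : ∀ n, strCoef (P v v) (P u v * P v u) n ≠ 0) :
    HasStretchedGrowth 𝓐 vac :=
  hasStretchedGrowth_of_loweringData hraise A.vac_ne (LoweringData.ofString huv h)
    (A.ker_act_mem_invtSubmodule v) (A.ker_act_mem_invtSubmodule_rootDer u v 0) (c := 1)
    fun X _ hX n => by rw [one_mul]; exact rootVec_mem_pow hX n

lemma hasStretchedGrowth_of_isotropic (hP : ∀ s t, P s t ≠ 0) {n : ℕ}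
    (h₁ : P u u ^ 2 * (P u v * P v u) ^ (n + 1) = 1)
    (h₂ : P u v * P v u * P v v ^ (2 * (n + 1)) = 1)
    (h : ∀ j ≤ n, strCoef (P v v) (P u v * P v u) j ≠ 0) : HasStretchedGrowth 𝓐 vac :=
  hasStretchedGrowth_of_loweringData hraise A.vac_ne
    (LoweringData.ofIsotropic huv hP (bichar_mul_bichar_eq_one h₁ h₂) h)
    (A.ker_act_mem_invtSubmodule_rootDer u v (n + 1)) (A.ker_act_mem_invtSubmodule_rootDer u v n)
    (c := n + 2) fun _ hone hX j => stringVec_mem_pow hone hX n j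

end Realization

end Realization

section RankTwo

variable {k M : Type*} [Field k] [AddCommGroup M] [Module k M]

/-- Raising operators `La`, `Lb` in `𝓐` for two letters `a`, `b` and `Lc` for their normalised
braided commutator, with lowering operators `Ra`, `Rb` that act as skew derivations for the braiding
with diagonal entries `q`, `p` and off-diagonal entries `s`, `s'`. -/
structure RankTwoSystem (𝓐 : Subalgebra k (Module.End k M)) (q p s s' : k)
    (La Lb Lc Ra Rb : Module.End k M) (vac : M) : Prop where
  La_mem : La ∈ 𝓐
  Lb_mem : Lb ∈ 𝓐
  Lc_mem : Lc ∈ 𝓐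
  Ra_La : ∀ m, Ra (La m) = m + q • La (Ra m)
  Ra_Lb : ∀ m, Ra (Lb m) = s • Lb (Ra m)
  Rb_La : ∀ m, Rb (La m) = s' • La (Rb m)
  Rb_Lb : ∀ m, Rb (Lb m) = m + p • Lb (Rb m)
  Ra_Lc : ∀ m, Ra (Lc m) = (s * q) • Lc (Ra m)
  Rb_Lc : ∀ m, Rb (Lc m) = La m + (s' * p) • Lc (Rb m)
  Lb_La : ∀ m, Lb (La m) = s • La (Lb m) + (1 - s * s') • Lc m
  Ra_vac : Ra vac = 0
  Rb_vac : Rb vac = 0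
  vac_ne : vac ≠ 0

namespace RankTwoSystem

variable {𝓐 : Subalgebra k (Module.End k M)} {q p s s' : k} {La Lb Lc Ra Rb : Module.End k M}
  {vac : M}

/-- The iterated braided commutators `(ad Lb) ^ j (La)`, divided by `1 - s * s'` for `1 ≤ j`; this
normalisation makes sense also when `s * s' = 1`. -/
def adPow (p s : k) (La Lb Lc : Module.End k M) : ℕ → Module.End k M
  | 0 => La
  | 1 => Lc
  | j + 2 =>
    Lb * adPow p s La Lb Lc (j + 1) - (s * p ^ (j + 1)) • (adPow p s La Lb Lc (j + 1) * Lb)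

/-- The coefficient with which `Rb` lowers `adPow (j + 1)` to `adPow j`. -/
def adPowCoef (p : k) : ℕ → k
  | 0 => 1
  | j + 1 => strCoef p (p ^ 2) j

/-- The lowering operators dual to `adPow`: iterated twisted commutators of `Ra` with `Rb`. -/
def adPowLower (p s' : k) (Ra Rb : Module.End k M) : ℕ → Module.End k M
  | 0 => Ra
  | l + 1 => adPowLower p s' Ra Rb l * Rb - (s' * (p ^ l)⁻¹) • (Rb * adPowLower p s' Ra Rb l)

local notation "Z" => adPow p s La Lb Lc
local notation "D" => adPowLower p s' Ra Rb

variable (H : RankTwoSystem 𝓐 q p s s' La Lb Lc Ra Rb vac)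
include H

lemma adPow_mem (j : ℕ) : Z j ∈ 𝓐 := by
  induction j using adPow.induct with
  | case1 => exact H.La_mem
  | case2 => exact H.Lc_mem
  | case3 j ih =>
    exact sub_mem (mul_mem H.Lb_mem ih) (Subalgebra.smul_mem _ (mul_mem ih H.Lb_mem) _)

lemma Ra_adPow_succ (j : ℕ) (m : M) : Ra (Z (j + 1) m) = (s ^ (j + 1) * q) • Z (j + 1) (Ra m) := by
  induction j generalizing m with
  | zero => rw [adPow, H.Ra_Lc, zero_add, pow_one]
  | succ j ih =>
    simp only [adPow, LinearMap.sub_apply, LinearMap.smul_apply, Module.End.mul_apply, map_sub,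
      map_smul, H.Ra_Lb, ih]
    module

lemma Rb_commutator {z ρ : Module.End k M} {c d t : k}
    (hz : ∀ m, Rb (z m) = ρ m + c • z (Rb m)) (hρ : ∀ m, p • Lb (ρ m) = d • ρ (Lb m) + t • z m)
    (m : M) : Rb ((Lb * z - d • (z * Lb)) m) =
      (1 - d * c + t) • z m + (p * c) • (Lb * z - d • (z * Lb)) (Rb m) := by
  have h := hρ m
  simp only [LinearMap.sub_apply, LinearMap.smul_apply, Module.End.mul_apply, map_sub,
    map_smul, H.Rb_Lb, hz, map_add, smul_add, h]
  module

lemma smul_Lb_adPow (hs : s * s' = 1) (j : ℕ) (m : M) :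
    p • Lb ((adPowCoef p j • Z j) m) = (s * p ^ (j + 1)) • (adPowCoef p j • Z j) (Lb m)
      + (adPowCoef p (j + 1) - 1 + p ^ (2 * (j + 1))) • Z (j + 1) m := by
  cases j with
  | zero => simp [adPow, adPowCoef, H.Lb_La, hs, strCoef, smul_smul, mul_comm p s]
  | succ j =>
    rw [adPowCoef, adPowCoef, strCoef_succ, adPow.eq_3]
    simp only [LinearMap.sub_apply, LinearMap.smul_apply, Module.End.mul_apply, map_smul]
    module

lemma Rb_adPow_succ (hs : s * s' = 1) (j : ℕ) (m : M) :
    Rb (Z (j + 1) m) = adPowCoef p j • Z j m + (s' * p ^ (j + 1)) • Z (j + 1) (Rb m) := by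
  induction j generalizing m with
  | zero => simp [adPow, adPowCoef, H.Rb_Lc]
  | succ j ih =>
    rw [adPow, H.Rb_commutator ih (H.smul_Lb_adPow hs j)]
    congr 2
    · linear_combination (-p ^ (2 * (j + 1))) * hs
    · ring

lemma adPowLower_vac (l : ℕ) : D l vac = 0 := by
  induction l with
  | zero => exact H.Ra_vac
  | succ l ih => simp [adPowLower, ih, H.Rb_vac]

lemma adPowLower_succ_La (l : ℕ) (m : M) :
    D (l + 1) (La m) = (q * s' ^ (l + 1)) • La (D (l + 1) m) := by
  induction l generalizing m with
  | zero =>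
    simp only [adPowLower, LinearMap.sub_apply, LinearMap.smul_apply, Module.End.mul_apply,
      H.Rb_La, H.Ra_La, map_smul, map_add, map_sub]
    match_scalars <;> ring
  | succ l ih =>
    rw [adPowLower]
    simp only [LinearMap.sub_apply, LinearMap.smul_apply, Module.End.mul_apply, H.Rb_La, ih,
      map_smul, map_sub]
    module

lemma adPowLower_adPow (hs : s * s' = 1) (hp : p ≠ 0) (l j : ℕ) (m : M) :
    D l (Z (l + j) m) = (if j = 0 then (∏ i ∈ Finset.range l, adPowCoef p i) • m else 0)
      + (s' ^ l * s ^ (l + j) * q * p ^ (l * (l + j))) • Z (l + j) (D l m) := by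
  induction l generalizing j m with
  | zero =>
    cases j with
    | zero => simp [adPowLower, adPow, H.Ra_La]
    | succ j => simp [adPowLower, H.Ra_adPow_succ]
  | succ l ih =>
    have hsucc (m : M) : D l (Z (l + j + 1) m) =
        (s' ^ l * s ^ (l + j + 1) * q * p ^ (l * (l + j + 1))) • Z (l + j + 1) (D l m) := by
      simpa [← add_assoc] using ih (j + 1) m
    have hcoef : s' * (p ^ l)⁻¹ * (s' ^ l * s ^ (l + j + 1) * q * p ^ (l * (l + j + 1))) =
        s' ^ l * s ^ (l + j) * q * p ^ (l * (l + j)) := by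
      field_simp
      linear_combination (q * s ^ (l + j) * s' ^ l * p ^ (l * (l + j + 1))) * hs
    rw [adPowLower, Nat.add_right_comm]
    simp only [LinearMap.sub_apply, LinearMap.smul_apply, Module.End.mul_apply,
      H.Rb_adPow_succ hs, map_add, map_smul, map_sub, hsucc, ih j]
    split_ifs with hj
    · subst hj
      rw [Finset.prod_range_succ]
      match_scalars
      · rw [add_zero]
        ring
      · linear_combination (-adPowCoef p l) * hcoef
      all_goals ring
    · match_scalars
      · linear_combination (-adPowCoef p (l + j)) * hcoef
      all_goals ring

/-- The realization given by `La` and `adPow l`, for the letters `a` and `a + l b`. -/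
def realizationAdPow (hs : s * s' = 1) (hp : p ≠ 0) {l : ℕ} (hl : l ≠ 0)
    (hcoef : ∀ i < l, adPowCoef p i ≠ 0) :
    Realization ![![q, s ^ l * q], ![q * s' ^ l, q * p ^ l ^ 2]] ![La, Z l]
      ![Ra, (∏ i ∈ Finset.range l, adPowCoef p i)⁻¹ • D l] vac where
  carrier := ⊤
  vac_mem := Submodule.mem_top
  raise_mem _ _ _ := Submodule.mem_top
  lower_raise := by
    obtain ⟨l, rfl⟩ := Nat.exists_eq_succ_of_ne_zero hl
    have hne : ∏ i ∈ Finset.range (l + 1), adPowCoef p i ≠ 0 :=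
      Finset.prod_ne_zero_iff.2 fun i hi => hcoef i (Finset.mem_range.1 hi)
    have hss : s' ^ (l + 1) * s ^ (l + 1) = 1 := by rw [← mul_pow, mul_comm s', hs, one_pow]
    have hD (m : M) : D (l + 1) (Z (l + 1) m) =
        (∏ i ∈ Finset.range (l + 1), adPowCoef p i) • m
          + (q * p ^ (l + 1) ^ 2) • Z (l + 1) (D (l + 1) m) := by
      simpa [hss, sq] using H.adPowLower_adPow hs hp (l + 1) 0 m
    exact fun
      | 0, 0, m, _ => by simp [H.Ra_La]
      | 0, 1, m, _ => by simp [H.Ra_adPow_succ]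
      | 1, 0, m, _ => by
        simpa [H.adPowLower_succ_La] using smul_comm _ (q * s' ^ (l + 1)) (La (D (l + 1) m))
      | 1, 1, m, _ => by
        simpa [hD, inv_smul_smul₀ hne] using
          smul_comm _ (q * p ^ (l + 1) ^ 2) (Z (l + 1) (D (l + 1) m))
  lower_vac := by simp [Fin.forall_fin_two, H.Ra_vac, H.adPowLower_vac]
  vac_ne := H.vac_ne

lemma Lc_La_commutator_lower (m : M) : Ra (Lc (La m) - (s * q) • La (Lc m)) =
    (s * q ^ 2) • (Lc (La (Ra m)) - (s * q) • La (Lc (Ra m))) := by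
  simp only [map_sub, map_smul, H.Ra_La, H.Ra_Lc, map_add]
  module

omit H in
lemma adPow_two_apply (m : M) : Z 2 m = Lb (Lc m) - (s * p) • Lc (Lb m) := by simp [adPow]

lemma Rb_adPow_two (m : M) :
    Rb (Z 2 m) = ((1 + p) * (1 - s * s' * p)) • Lc m + (s' * p ^ 2) • Z 2 (Rb m) := by
  simp only [adPow_two_apply, map_sub, map_smul, H.Rb_Lb, H.Rb_Lc, H.Lb_La, map_add]
  module

omit H in
/-- The braided commutator of `adPow 2` and `La`, of degree `2 (a + b)`, corrected by a multiple of
`Lc * Lc` so that it forms a rank two pair with `Lc`; `η` stands for `(1 + s * s' * (p * q))⁻¹`. -/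
def doubledOp (q p s s' η : k) (La Lb Lc : Module.End k M) : Module.End k M :=
  adPow p s La Lb Lc 2 * La - (s ^ 2 * q) • (La * adPow p s La Lb Lc 2) -
    ((1 + p) * (1 - s * s' * p) * (1 - s * s') * s * q * η) • (Lc * Lc)

variable {η : k}

local notation "V" => doubledOp q p s s' η La Lb Lc

lemma doubledOp_mem : V ∈ 𝓐 :=
  sub_mem (sub_mem (mul_mem (H.adPow_mem 2) H.La_mem)
    (Subalgebra.smul_mem _ (mul_mem H.La_mem (H.adPow_mem 2)) _))
    (Subalgebra.smul_mem _ (mul_mem H.Lc_mem H.Lc_mem) _)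

lemma Ra_doubledOp (m : M) : Ra (V m) = (s ^ 2 * q ^ 2) • V (Ra m) := by
  simp only [doubledOp, LinearMap.sub_apply, LinearMap.smul_apply, Module.End.mul_apply, map_sub,
    map_smul, H.Ra_La, H.Ra_Lc, map_add, H.Ra_adPow_succ 1]
  module

lemma Rb_doubledOp (hη : η * (1 + s * s' * (p * q)) = 1) (m : M) :
    Rb (V m) = ((1 + p) * (1 - s * s' * p) * (1 + (s * s') ^ 2 * (p * q)) * η) •
      (Lc (La m) - (s * q) • La (Lc m)) + (s' ^ 2 * p ^ 2) • V (Rb m) := by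
  simp only [doubledOp, LinearMap.sub_apply, LinearMap.smul_apply, Module.End.mul_apply, map_sub,
    map_smul, H.Rb_La, H.Rb_Lc, map_add, H.Rb_adPow_two, smul_sub]
  match_scalars
  · linear_combination (-(1 + p) * (1 - s * s' * p)) * hη
  · ring
  · linear_combination (s * q * s * s' * (1 + p) * (1 - s * s' * p)) * hη
  · ring
  · ring

/-- The realization given by `Lc` and `doubledOp`, for the letters `a + b` and `2 (a + b)`. -/
def realizationDoubledOp (hη : η * (1 + s * s' * (p * q)) = 1) {δ : k}
    (hδ : δ * ((1 + p) * (1 - s * s' * p) * (1 + (s * s') ^ 2 * (p * q)) * (1 - s * s' * q) *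
      (1 + q) * η) = 1) :
    Realization ![![s * s' * (p * q), (s * s' * (p * q)) ^ 2],
        ![(s * s' * (p * q)) ^ 2, (s * s' * (p * q)) ^ 4]] ![Lc, V]
      ![Ra * Rb, δ • (Ra * Ra * Rb * Rb - (s' * (1 + p) * (1 + q) * η) • (Ra * Rb * Ra * Rb))]
      vac where
  carrier := LinearMap.ker Ra ⊓ LinearMap.ker (Ra * Ra * Rb)
  vac_mem := by simp [H.Ra_vac, H.Rb_vac]
  raise_mem := by
    simp only [Fin.forall_fin_two, Submodule.mem_inf, LinearMap.mem_ker, Module.End.mul_apply,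
      Matrix.cons_val_zero, Matrix.cons_val_one]
    refine ⟨fun m ⟨h₁, h₂⟩ => ?_, fun m ⟨h₁, h₂⟩ => ?_⟩
    · simp [H.Ra_Lc, H.Rb_Lc, H.Ra_La, h₁, h₂]
    · simp only [H.Ra_doubledOp, H.Rb_doubledOp hη, h₁, h₂, map_add, map_smul,
        H.Lc_La_commutator_lower]
      simp
  lower_raise := by
    simp only [Fin.forall_fin_two, Submodule.mem_inf, LinearMap.mem_ker, Module.End.mul_apply,
      Matrix.cons_val_zero, Matrix.cons_val_one, one_ne_zero, zero_ne_one, if_true, if_false,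
      LinearMap.smul_apply, LinearMap.sub_apply]
    refine ⟨⟨fun m ⟨h₁, h₂⟩ => ?_, fun m ⟨h₁, h₂⟩ => ?_⟩,
      fun m ⟨h₁, h₂⟩ => ?_, fun m ⟨h₁, h₂⟩ => ?_⟩ <;>
      simp only [H.Ra_doubledOp, H.Rb_doubledOp hη, H.Ra_Lc, H.Rb_Lc, H.Rb_La, H.Ra_La, h₁, h₂,
        map_add, map_smul, map_sub, smul_zero, map_zero, add_zero]
    · module
    · match_scalars <;> ring
    · match_scalars
      · linear_combination (-δ * s' * (1 + p) * (1 + q)) * hη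
      all_goals ring
    · match_scalars
      · linear_combination hδ
      all_goals ring
  lower_vac := by simp [Fin.forall_fin_two, H.Rb_vac]
  vac_ne := H.vac_ne

lemma system_Lc_La (hs : s * s' = 1) (hp : p = 1) {γ : k} (hγ : γ * (1 - q ^ 2) = 1) :
    RankTwoSystem 𝓐 q q (q * s') (s * q) Lc La (γ • (La * Lc - (q * s') • (Lc * La)))
      (D 1) Ra vac := by
  have hLc (m : M) : D 1 (Lc m) = m + q • Lc (D 1 m) := by
    have hss : s' * s = 1 := by rw [mul_comm, hs]
    simpa [adPow, adPowCoef, hp, hss] using H.adPowLower_adPow hs (hp ▸ one_ne_zero) 1 0 m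
  have hLa (m : M) : D 1 (La m) = (q * s') • La (D 1 m) := by
    simpa using H.adPowLower_succ_La 0 m
  refine ⟨H.Lc_mem, H.La_mem, ?_, hLc, hLa, H.Ra_Lc, H.Ra_La, fun m => ?_, fun m => ?_,
    fun m => ?_, H.adPowLower_vac 1, H.Ra_vac, H.vac_ne⟩
  · exact Subalgebra.smul_mem _ (sub_mem (mul_mem H.La_mem H.Lc_mem)
      (Subalgebra.smul_mem _ (mul_mem H.Lc_mem H.La_mem) _)) _
  · simp only [LinearMap.smul_apply, LinearMap.sub_apply, Module.End.mul_apply, map_add, map_smul,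
      map_sub, hLc, hLa]
    module
  · simp only [LinearMap.smul_apply, LinearMap.sub_apply, Module.End.mul_apply, map_add, map_smul,
      map_sub, H.Ra_Lc, H.Ra_La]
    match_scalars
    · linear_combination hγ - γ * q ^ 2 * hs
    all_goals ring
  · simp only [LinearMap.smul_apply, LinearMap.sub_apply, Module.End.mul_apply]
    match_scalars
    · linear_combination -hγ + γ * q ^ 2 * hs
    · linear_combination q * s' * hγ - γ * q ^ 3 * s' * hs

end RankTwoSystem

end RankTwo

section CaseAnalysis

variable {k : Type*} [Field k]

lemma geom_sum_ne_zero_of_pow_ne_one {q : k} {n : ℕ} (h : q ^ n ≠ 1) :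
    ∑ i ∈ Finset.range n, q ^ i ≠ 0 := fun h₀ =>
  h (sub_eq_zero.1 (by rw [← geom_sum_mul, h₀, zero_mul]))

lemma strCoef_ne_zero {q ω : k} {n : ℕ} (h : q ^ (n + 1) ≠ 1) (h' : ω * q ^ n ≠ 1) :
    strCoef q ω n ≠ 0 :=
  mul_ne_zero (geom_sum_ne_zero_of_pow_ne_one h) (sub_ne_zero.2 h'.symm)

lemma one_add_pow_ne_zero_of_odd_orderOf [CharZero k] {q : k} (hq : Odd (orderOf q)) (n : ℕ) :
    1 + q ^ n ≠ 0 := by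
  intro h
  have hneg : q ^ n = -1 := by linear_combination h
  have hone : (q ^ n) ^ orderOf q = 1 := by rw [pow_right_comm, pow_orderOf_eq_one, one_pow]
  rw [hneg, hq.neg_one_pow] at hone
  exact (by norm_num : (-1 : k) ≠ 1) hone

lemma pow_eq_one_of_mul_eq_one_of_coprime {G : Type*} [CommMonoid G] {x y : G}
    (hco : (orderOf x).Coprime (orderOf y)) {a b : ℕ} (h : x ^ a * y ^ b = 1) :
    x ^ a = 1 ∧ y ^ b = 1 := by
  have hco' : (orderOf (x ^ a)).Coprime (orderOf (y ^ b)) :=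
    (hco.coprime_dvd_left (orderOf_pow_dvd a)).coprime_dvd_right (orderOf_pow_dvd b)
  have hmul := (Commute.all (x ^ a) (y ^ b)).orderOf_mul_eq_mul_orderOf_of_coprime hco'
  rw [h, orderOf_one, eq_comm, mul_eq_one, orderOf_eq_one_iff, orderOf_eq_one_iff] at hmul
  exact hmul

lemma exists_isotropic_length {q π : k} {e : ℕ} (hq : Odd (orderOf q)) (hq₁ : orderOf q ≠ 1)
    (hπ : orderOf π = 2 ^ (e + 1)) : ∃ n, q ^ (2 * (n + 2)) = 1 ∧ π ^ (2 * (n + 1)) = 1 ∧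
      ∀ j ≤ n, strCoef (q * π) (q ^ 2) j ≠ 0 := by
  have hco : (orderOf q).Coprime 2 := Nat.coprime_two_right.2 hq
  have hcoπ : (orderOf q).Coprime (orderOf π) := hπ ▸ hco.pow_right _
  have hex : ∃ m, orderOf q ∣ m + 1 ∧ 2 ^ e ∣ m := by
    obtain ⟨m, hm₁, hm₂⟩ := Nat.chineseRemainder (hco.pow_right e) (orderOf q - 1) 0
    refine ⟨m, ?_, Nat.modEq_zero_iff_dvd.1 hm₂⟩
    simpa [Nat.sub_add_cancel hq.pos, Nat.ModEq, Nat.dvd_iff_mod_eq_zero] using hm₁.add_right 1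
  classical
  obtain ⟨hm₁, hm₂⟩ := Nat.find_spec hex
  have hmin {r : ℕ} : r < Nat.find hex → ¬ (orderOf q ∣ r + 1 ∧ 2 ^ e ∣ r) := Nat.find_min hex
  generalize Nat.find hex = m at hm₁ hm₂ hmin
  obtain _ | n := m
  · exact absurd (Nat.dvd_one.1 hm₁) hq₁
  refine ⟨n, orderOf_dvd_iff_pow_eq_one.1 (hm₁.mul_left 2), orderOf_dvd_iff_pow_eq_one.1
    (by rw [hπ, pow_succ']; exact mul_dvd_mul_left 2 hm₂), fun j hj => strCoef_ne_zero ?_ ?_⟩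
  · intro h
    rw [mul_pow] at h
    obtain ⟨hqj, hπj⟩ := pow_eq_one_of_mul_eq_one_of_coprime hcoπ h
    rw [← orderOf_dvd_iff_pow_eq_one] at hqj hπj
    rw [hπ] at hπj
    refine hmin (r := n + 1 - (j + 1)) (by omega) ⟨?_, Nat.dvd_sub hm₂
      ((pow_dvd_pow 2 e.le_succ).trans hπj)⟩
    rw [← Nat.sub_add_comm (by omega)]
    exact Nat.dvd_sub hm₁ hqj
  · intro h
    rw [mul_pow, ← mul_assoc, ← pow_add] at h
    obtain ⟨hqj, hπj⟩ := pow_eq_one_of_mul_eq_one_of_coprime hcoπ h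
    rw [← orderOf_dvd_iff_pow_eq_one] at hqj hπj
    rw [hπ] at hπj
    obtain ⟨c, rfl⟩ := hπj
    refine hmin (r := 2 ^ e * c) (by rw [pow_succ'] at hj; lia)
      ⟨hco.dvd_of_dvd_mul_left (m := 2) ?_, dvd_mul_right _ _⟩
    convert hqj using 1
    ring

lemma pow_mul_mul_mul_pow {q s s' : k} (hs : s * s' = 1) (l : ℕ) :
    s ^ l * q * (q * s' ^ l) = q ^ 2 := by
  have hss : s ^ l * s' ^ l = 1 := by rw [← mul_pow, hs, one_pow]
  linear_combination q ^ 2 * hss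

lemma rankTwo_diag {α : Type*} {a b c d : α} (u : Fin 2) :
    ![![a, b], ![c, d]] u u = ![a, d] u := by
  fin_cases u <;> rfl

lemma rankTwo_offDiag_mul {a b c d : k} {u v : Fin 2} (huv : u ≠ v) :
    ![![a, b], ![c, d]] u v * ![![a, b], ![c, d]] v u = b * c := by
  fin_cases u <;> fin_cases v <;> first | exact absurd rfl huv | simp [mul_comm]

variable {M : Type*} [AddCommGroup M] [Module k M]

namespace RankTwoSystem

variable {𝓐 : Subalgebra k (Module.End k M)} {q p s s' : k} {La Lb Lc Ra Rb : Module.End k M}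
  {vac : M}

lemma adPowCoef_ne_zero {i : ℕ} (h : i = 0 ∨ i + 1 < orderOf p) : adPowCoef p i ≠ 0 := by
  cases i with
  | zero => exact one_ne_zero
  | succ i =>
    refine strCoef_ne_zero (pow_ne_one_of_lt_orderOf (by omega) (by omega)) ?_
    rw [← pow_add]
    exact pow_ne_one_of_lt_orderOf (by omega) (by omega)

variable (H : RankTwoSystem 𝓐 q p s s' La Lb Lc Ra Rb vac)
include H

lemma hasStretchedGrowth_of_adPow_string (hs : s * s' = 1) (hp₀ : p ≠ 0) {l : ℕ} (hl : l ≠ 0)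
    (hlp : l = 1 ∨ l < orderOf p) {u v : Fin 2} (huv : u ≠ v)
    (h : ∀ n, strCoef (![q, q * p ^ l ^ 2] v) (q ^ 2) n ≠ 0) : HasStretchedGrowth 𝓐 vac := by
  refine (H.realizationAdPow hs hp₀ hl fun i hi =>
    adPowCoef_ne_zero (by omega)).hasStretchedGrowth_of_string ?_ huv fun n => ?_
  · simp [Fin.forall_fin_two, H.La_mem, H.adPow_mem]
  · rw [rankTwo_diag, rankTwo_offDiag_mul huv, pow_mul_mul_mul_pow hs]
    exact h n

lemma hasStretchedGrowth_of_adPow_isotropic (hs : s * s' = 1) (hq₀ : q ≠ 0) (hp₀ : p ≠ 0) {l : ℕ}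
    (hl : l ≠ 0) (hlp : l = 1 ∨ l < orderOf p) {u v : Fin 2} (huv : u ≠ v) {n : ℕ}
    (h₁ : ![q, q * p ^ l ^ 2] u ^ 2 * (q ^ 2) ^ (n + 1) = 1)
    (h₂ : q ^ 2 * ![q, q * p ^ l ^ 2] v ^ (2 * (n + 1)) = 1)
    (h : ∀ i ≤ n, strCoef (![q, q * p ^ l ^ 2] v) (q ^ 2) i ≠ 0) : HasStretchedGrowth 𝓐 vac := by
  have hs₀ : s ≠ 0 := left_ne_zero_of_mul_eq_one hs
  have hs₀' : s' ≠ 0 := right_ne_zero_of_mul_eq_one hs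
  refine (H.realizationAdPow hs hp₀ hl fun i hi =>
    adPowCoef_ne_zero (by omega)).hasStretchedGrowth_of_isotropic (n := n) ?_ huv ?_ ?_ ?_ ?_
  · simp [Fin.forall_fin_two, H.La_mem, H.adPow_mem]
  · simp [Fin.forall_fin_two, hs₀, hs₀', hq₀, hp₀]
  all_goals rwa [rankTwo_diag, rankTwo_offDiag_mul huv, pow_mul_mul_mul_pow hs]

lemma hasStretchedGrowth_of_orderOf_eq_zero (hs : s * s' = 1) (hp₀ : p ≠ 0)
    (hq : orderOf q = 0) : HasStretchedGrowth 𝓐 vac := by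
  have hpow {n : ℕ} (hn : n ≠ 0) : q ^ n ≠ 1 := fun h =>
    hn (Nat.eq_zero_of_zero_dvd (hq ▸ orderOf_dvd_of_pow_eq_one h))
  refine H.hasStretchedGrowth_of_adPow_string hs hp₀ one_ne_zero (.inl rfl) (u := 1) (v := 0)
    one_ne_zero fun n => strCoef_ne_zero (hpow n.succ_ne_zero) ?_
  rw [Matrix.cons_val_zero, ← pow_add]
  exact hpow (by omega)

lemma hasStretchedGrowth_of_even (hs : s * s' = 1) (hq₀ : q ≠ 0) (hp₀ : p ≠ 0)
    (hq : Even (orderOf q)) (hq₂ : 2 < orderOf q) (hp₁ : 0 < orderOf p)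
    (hp : orderOf p = 1 ∨ Even (orderOf p)) : HasStretchedGrowth 𝓐 vac := by
  obtain ⟨l, hl, hlp, hpl⟩ : ∃ l ≠ 0, (l = 1 ∨ l < orderOf p) ∧ p ^ (2 * l) = 1 := by
    rcases hp with hp | ⟨l, hl⟩
    · exact ⟨1, one_ne_zero, .inl rfl, by rw [orderOf_eq_one_iff.1 hp, one_pow]⟩
    · exact ⟨l, by omega, by omega, by rw [two_mul, ← hl, pow_orderOf_eq_one]⟩
  obtain ⟨N, hN⟩ := hq
  obtain ⟨n, rfl⟩ : ∃ n, N = n + 2 := ⟨N - 2, by omega⟩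
  have hqN : q ^ (2 * (n + 2)) = 1 := by rw [two_mul, ← hN, pow_orderOf_eq_one]
  refine H.hasStretchedGrowth_of_adPow_isotropic hs hq₀ hp₀ hl hlp (u := 1) (v := 0) one_ne_zero
    (n := n) ?_ ?_ fun i hi => strCoef_ne_zero ?_ ?_
  · calc (q * p ^ l ^ 2) ^ 2 * (q ^ 2) ^ (n + 1) = q ^ (2 * (n + 2)) * (p ^ (2 * l)) ^ l := by ring
      _ = 1 := by rw [hqN, hpl, one_pow, one_mul]
  · rw [Matrix.cons_val_zero, ← hqN]
    ring
  · exact pow_ne_one_of_lt_orderOf i.succ_ne_zero (by rw [Matrix.cons_val_zero]; omega)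
  · rw [Matrix.cons_val_zero, ← pow_add]
    exact pow_ne_one_of_lt_orderOf (by omega) (by omega)

lemma hasStretchedGrowth_of_odd_of_even (hs : s * s' = 1) (hq₀ : q ≠ 0) (hp₀ : p ≠ 0)
    (hq : Odd (orderOf q)) (hq₁ : orderOf q ≠ 1) (hp₁ : 0 < orderOf p) (hp : Even (orderOf p)) :
    HasStretchedGrowth 𝓐 vac := by
  obtain ⟨e, l, hl, hel⟩ := Nat.exists_eq_two_pow_mul_odd hp₁.ne'
  obtain _ | e := e
  · exact absurd hp (by rwa [hel, pow_zero, one_mul, Nat.not_even_iff_odd])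
  have hl₀ : l ≠ 0 := hl.pos.ne'
  have hlp : l < orderOf p := hel ▸ lt_mul_of_one_lt_left hl.pos (Nat.one_lt_two_pow e.succ_ne_zero)
  have hπ : orderOf (p ^ l ^ 2) = 2 ^ (e + 1) := by
    have hco : (2 ^ (e + 1)).gcd l = 1 := (Nat.coprime_two_left.2 hl).pow_left _
    rw [orderOf_pow' p (by positivity), hel, sq, Nat.gcd_mul_right, hco, one_mul,
      Nat.mul_div_cancel _ hl.pos]
  obtain ⟨n, hqn, hπn, hn⟩ := exists_isotropic_length hq hq₁ hπ
  refine H.hasStretchedGrowth_of_adPow_isotropic hs hq₀ hp₀ hl₀ (.inr hlp) (u := 0) (v := 1)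
    zero_ne_one (n := n) ?_ ?_ hn
  · rw [Matrix.cons_val_zero, ← hqn]
    ring
  · rw [Matrix.cons_val_one, Matrix.cons_val_fin_one, mul_pow, hπn, mul_one, ← hqn]
    ring

lemma hasStretchedGrowth_of_doubledOp [CharZero k] (hW : Odd (orderOf (s * s' * (p * q))))
    (hW₁ : s * s' * (p * q) ≠ 1)
    (h : (1 + p) * (1 - s * s' * p) * (1 + (s * s') ^ 2 * (p * q)) * (1 - s * s' * q) * (1 + q)
      ≠ 0) : HasStretchedGrowth 𝓐 vac := by
  have hη := inv_mul_cancel₀ (by simpa using one_add_pow_ne_zero_of_odd_orderOf hW 1)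
  have R := H.realizationDoubledOp hη
    (inv_mul_cancel₀ (mul_ne_zero h (left_ne_zero_of_mul_eq_one hη)))
  generalize s * s' * (p * q) = W at hW hW₁ R
  have hW₀ : W ≠ 0 := by
    rintro rfl
    simp at hW
  obtain ⟨n, hn⟩ : ∃ n, orderOf W = 2 * n + 3 := by
    rw [Ne, ← orderOf_eq_one_iff] at hW₁
    obtain ⟨t, ht⟩ := hW
    exact ⟨t - 1, by omega⟩
  have hWn : W ^ (2 * n + 3) = 1 := by rw [← hn, pow_orderOf_eq_one]
  have hW₄ (i : ℕ) (hi : i ≤ n) : (W ^ 4) ^ (i + 1) ≠ 1 := fun h => by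
    rw [← pow_mul, ← orderOf_dvd_iff_pow_eq_one] at h
    have := Nat.le_of_dvd i.succ_pos (Nat.Coprime.dvd_of_dvd_mul_left
      ((Nat.coprime_two_right.2 hW).pow_right 2) h)
    omega
  refine R.hasStretchedGrowth_of_isotropic (n := n) ?_ zero_ne_one ?_ ?_ ?_ fun i hi =>
    strCoef_ne_zero (hW₄ i hi) ?_
  · simp [Fin.forall_fin_two, H.Lc_mem, H.doubledOp_mem]
  · simp [Fin.forall_fin_two, hW₀]
  · calc W ^ 2 * (W ^ 2 * W ^ 2) ^ (n + 1) = (W ^ (2 * n + 3)) ^ 2 := by ring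
      _ = 1 := by rw [hWn, one_pow]
  · calc W ^ 2 * W ^ 2 * (W ^ 4) ^ (2 * (n + 1)) = (W ^ (2 * n + 3)) ^ 4 := by ring
      _ = 1 := by rw [hWn, one_pow]
  · convert hW₄ i hi using 1
    change W ^ 2 * W ^ 2 * (W ^ 4) ^ i = _
    ring

lemma hasStretchedGrowth_of_odd_of_eq_one [CharZero k] (hs : s * s' = 1) (hp : p = 1)
    (hq : Odd (orderOf q)) (hq₃ : 3 < orderOf q) : HasStretchedGrowth 𝓐 vac := by
  have hne {n : ℕ} (h₀ : n ≠ 0) (hn : n < 4) : 1 - q ^ n ≠ 0 :=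
    sub_ne_zero.2 (pow_ne_one_of_lt_orderOf h₀ (by omega)).symm
  have hpos := one_add_pow_ne_zero_of_odd_orderOf hq
  have hω : q * s' * (s * q) = q ^ 2 := by linear_combination q ^ 2 * hs
  have hW : q * s' * (s * q) * (q * q) = q ^ 4 := by rw [hω]; ring
  have hord : orderOf (q ^ 4) = orderOf q :=
    Nat.Coprime.orderOf_pow ((Nat.coprime_two_right.2 hq).pow_right 2)
  refine (H.system_Lc_La hs hp (inv_mul_cancel₀ (hne two_ne_zero (by omega))))
    |>.hasStretchedGrowth_of_doubledOp ?_ ?_ ?_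
  · rwa [hW, hord]
  · rw [hW, Ne, ← orderOf_eq_one_iff, hord]
    omega
  · convert mul_ne_zero (mul_ne_zero (mul_ne_zero (mul_ne_zero (hpos 1)
      (hne three_ne_zero (by omega))) (hpos 6)) (hne three_ne_zero (by omega))) (hpos 1) using 1
    rw [hω]
    ring

lemma hasStretchedGrowth_of_odd_of_odd [CharZero k] (hs : s * s' = 1) (hq : Odd (orderOf q))
    (hq₁ : orderOf q ≠ 1) (hp : Odd (orderOf p)) (hp₁ : orderOf p ≠ 1) :
    HasStretchedGrowth 𝓐 vac := by
  by_cases hpq : p * q = 1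
  · have hq₂ : q ^ 2 ≠ 1 := by
      rw [Ne, ← orderOf_dvd_iff_pow_eq_one]
      exact fun h => hq₁ (Nat.Coprime.eq_one_of_dvd (Nat.coprime_two_right.2 hq) h)
    refine H.hasStretchedGrowth_of_adPow_string hs (left_ne_zero_of_mul_eq_one hpq) one_ne_zero
      (.inl rfl) (u := 0) (v := 1) zero_ne_one fun n => ?_
    have hd : ![q, q * p ^ 1 ^ 2] 1 = 1 := by simp [mul_comm q, hpq]
    rw [hd, strCoef, one_pow, mul_one]
    refine mul_ne_zero ?_ (sub_ne_zero.2 hq₂.symm)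
    simpa using (Nat.cast_add_one_ne_zero n : (n : k) + 1 ≠ 0)
  · have hodd : Odd (orderOf (p * q)) :=
      (hp.mul hq).of_dvd_nat ((Commute.all p q).orderOf_mul_dvd_mul_orderOf)
    have hneg {x : k} (hx : orderOf x ≠ 1) : 1 - x ≠ 0 :=
      sub_ne_zero.2 fun h => hx (orderOf_eq_one_iff.2 h.symm)
    have hpos {x : k} (hx : Odd (orderOf x)) : 1 + x ≠ 0 := by
      simpa using one_add_pow_ne_zero_of_odd_orderOf hx 1
    apply H.hasStretchedGrowth_of_doubledOp <;> simp only [hs, one_mul, one_pow]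
    · exact hodd
    · exact hpq
    · exact mul_ne_zero (mul_ne_zero (mul_ne_zero (mul_ne_zero (hpos hp) (hneg hp₁)) (hpos hodd))
        (hneg hq₁)) (hpos hq)

theorem hasStretchedGrowth [CharZero k] {Lc' : Module.End k M}
    (H' : RankTwoSystem 𝓐 p q s' s Lb La Lc' Rb Ra vac) (hs : s * s' = 1) (hq₀ : q ≠ 0)
    (hp₀ : p ≠ 0) (hord : orderOf q = 0 ∨ orderOf p = 0 ∨ 4 < orderOf q + orderOf p) :
    HasStretchedGrowth 𝓐 vac := by
  have hs' : s' * s = 1 := by rw [mul_comm, hs]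
  by_cases hq : orderOf q = 0
  · exact H.hasStretchedGrowth_of_orderOf_eq_zero hs hp₀ hq
  by_cases hp : orderOf p = 0
  · exact H'.hasStretchedGrowth_of_orderOf_eq_zero hs' hq₀ hp
  have hord : 4 < orderOf q + orderOf p := by tauto
  rcases (orderOf q).even_or_odd with hqe | hqo <;> rcases (orderOf p).even_or_odd with hpe | hpo
  · by_cases hq₂ : 2 < orderOf q
    · exact H.hasStretchedGrowth_of_even hs hq₀ hp₀ hqe hq₂ (by omega) (.inr hpe)
    · exact H'.hasStretchedGrowth_of_even hs' hp₀ hq₀ hpe (by omega) (by omega) (.inr hqe)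
  · by_cases hp₁ : orderOf p = 1
    · exact H.hasStretchedGrowth_of_even hs hq₀ hp₀ hqe (by omega) (by omega) (.inl hp₁)
    · exact H'.hasStretchedGrowth_of_odd_of_even hs' hp₀ hq₀ hpo hp₁ (by omega) hqe
  · by_cases hq₁ : orderOf q = 1
    · exact H'.hasStretchedGrowth_of_even hs' hp₀ hq₀ hpe (by omega) (by omega) (.inl hq₁)
    · exact H.hasStretchedGrowth_of_odd_of_even hs hq₀ hp₀ hqo hq₁ (by omega) hpe
  · by_cases hp₁ : orderOf p = 1
    · exact H.hasStretchedGrowth_of_odd_of_eq_one hs (orderOf_eq_one_iff.1 hp₁) hqo (by omega)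
    by_cases hq₁ : orderOf q = 1
    · exact H'.hasStretchedGrowth_of_odd_of_eq_one hs' (orderOf_eq_one_iff.1 hq₁) hpo (by omega)
    · exact H.hasStretchedGrowth_of_odd_of_odd hs hqo hq₁ hpo hp₁

end RankTwoSystem

end CaseAnalysis

section Words

variable {k ι : Type*} [CommRing k]

local notation "𝕋" => FreeAlgebra k ι
local notation "𝔵" => FreeAlgebra.ι k (X := ι)

/-- The monomial of the free algebra given by a list of letters. -/
def word (k : Type*) [CommRing k] {ι : Type*} (l : List ι) : FreeAlgebra k ι :=
  (l.map (FreeAlgebra.ι k)).prod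

lemma word_nil : word k ([] : List ι) = 1 := rfl

lemma word_cons (t : ι) (l : List ι) : word k (t :: l) = 𝔵 t * word k l := List.prod_cons

lemma sigma_word (Q : ι → ι → k) (t : ι) (l : List ι) :
    sigma Q t (word k l) = (l.map (Q t)).prod • word k l := by
  induction l with
  | nil => simp [word_nil]
  | cons b l ih => rw [word_cons, map_mul, sigma_ι, ih, List.map_cons, List.prod_cons,
      smul_mul_smul_comm]

lemma basisFreeMonoid_ofList (l : List ι) :
    FreeAlgebra.basisFreeMonoid k ι (FreeMonoid.ofList l) = word k l := by
  change FreeAlgebra.equivMonoidAlgebraFreeMonoid.symm (MonoidAlgebra.single _ 1) = _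
  simp [FreeAlgebra.equivMonoidAlgebraFreeMonoid, FreeMonoid.lift_apply, word]

lemma linearMap_ext_word {N : Type*} [AddCommGroup N] [Module k N] {α β : 𝕋 →ₗ[k] N}
    (h : ∀ l, α (word k l) = β (word k l)) : α = β :=
  (FreeAlgebra.basisFreeMonoid k ι).ext fun l => by
    rw [← FreeMonoid.ofList_toList l, basisFreeMonoid_ofList]
    exact h _

/-- The functional on the free algebra that reads off the coefficient of a word. -/
def coef (k : Type*) [CommRing k] {ι : Type*} (w : List ι) : Module.Dual k (FreeAlgebra k ι) :=
  (FreeAlgebra.basisFreeMonoid k ι).coord (FreeMonoid.ofList w)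

lemma coef_word [DecidableEq ι] (w l : List ι) :
    coef k w (word k l) = if l = w then 1 else 0 := by
  classical
  rw [coef, ← basisFreeMonoid_ofList, Module.Basis.coord_apply, Module.Basis.repr_self,
    Finsupp.single_apply]
  exact if_congr FreeMonoid.ofList.injective.eq_iff rfl rfl

lemma coef_apply_one (w : List ι) : coef k w 1 = if w = [] then 1 else 0 := by
  classical
  exact (coef_word w []).trans (if_congr eq_comm rfl rfl)

lemma coef_comp_sigma (Q : ι → ι → k) (t : ι) (w : List ι) :
    coef k w ∘ₗ (sigma Q t).toLinearMap = (w.map (Q t)).prod • coef k w := by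
  classical
  refine linearMap_ext_word fun l => ?_
  simp only [LinearMap.comp_apply, AlgHom.toLinearMap_apply, sigma_word, map_smul,
    LinearMap.smul_apply, coef_word]
  split_ifs with h
  · rw [h]
  · simp

/-- The transpose of left multiplication by a letter. -/
def letterDer (t : ι) : Module.End k (Module.Dual k 𝕋) := (LinearMap.mulLeft k (𝔵 t)).dualMap

lemma letterDer_apply (t : ι) (β : Module.Dual k 𝕋) (x : 𝕋) : letterDer t β x = β (𝔵 t * x) := rfl

lemma letterDer_word (t : ι) (β : Module.Dual k 𝕋) (l : List ι) :
    letterDer t β (word k l) = β (word k (t :: l)) := by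
  rw [letterDer_apply, word_cons]

lemma letterDer_coef_nil (t : ι) : letterDer t (coef k []) = 0 := by
  classical
  exact linearMap_ext_word fun l => by simp [letterDer_word, coef_word]

lemma letterDer_coef_cons [DecidableEq ι] (t t' : ι) (w : List ι) :
    letterDer t (coef k (t' :: w)) = if t = t' then coef k w else 0 := by
  refine linearMap_ext_word fun l => ?_
  rw [letterDer_word, coef_word]
  split_ifs <;> simp_all [coef_word]

lemma eq_of_letterDer {α β : Module.Dual k 𝕋} (hone : α 1 = β 1)
    (h : ∀ t, letterDer t α = letterDer t β) : α = β :=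
  linearMap_ext_word fun l => by
    cases l with
    | nil => exact hone
    | cons t l => rw [← letterDer_word, h, letterDer_word]

lemma eq_zero_of_letterDer_comm {ν : Module.End k (Module.Dual k 𝕋)} {c : ι → k}
    (hone : ∀ β, ν β 1 = 0) (h : ∀ t β, letterDer t (ν β) = c t • ν (letterDer t β)) : ν = 0 := by
  refine LinearMap.ext fun β => linearMap_ext_word fun l => ?_
  induction l generalizing β with
  | nil => exact hone β
  | cons t l ih => rw [← letterDer_word, h, LinearMap.smul_apply, ih]; simp

/-- The functionals that vanish on all words with more than `n` letters. -/
def dualFil (k ι : Type*) [CommRing k] (n : ℕ) : Submodule k (Module.Dual k (FreeAlgebra k ι)) where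
  carrier := {α | ∀ l, n < l.length → α (word k l) = 0}
  add_mem' hα hβ l hl := by simp [hα l hl, hβ l hl]
  zero_mem' _ _ := rfl
  smul_mem' c _ hα l hl := by simp [hα l hl]

lemma monotone_dualFil : Monotone (dualFil k ι) := fun _ _ h _ hα l hl => hα l (h.trans_lt hl)

lemma coef_mem_dualFil (w : List ι) : coef k w ∈ dualFil k ι w.length := fun l hl => by
  classical
  rw [coef_word, if_neg (by rintro rfl; exact lt_irrefl _ hl)]

end Words

section Convolution

open TensorProduct (dualDistrib)

section General

variable {k A : Type*} [CommRing k] [AddCommGroup A] [Module k A]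

/-- Left convolution of functionals, for a comultiplication `Δ`. -/
def leftConv (Δ : A →ₗ[k] A ⊗[k] A) : Module.Dual k A →ₗ[k] Module.End k (Module.Dual k A) :=
  (TensorProduct.mk k _ _).compr₂ (Δ.dualMap ∘ₗ dualDistrib k A A)

lemma leftConv_apply (Δ : A →ₗ[k] A ⊗[k] A) (φ β : Module.Dual k A) (x : A) :
    leftConv Δ φ β x = dualDistrib k A A (φ ⊗ₜ β) (Δ x) := rfl

lemma dualDistrib_tmul_map {A' : Type*} [AddCommGroup A'] [Module k A'] (φ β : Module.Dual k A')
    (f g : A →ₗ[k] A') (y : A ⊗[k] A) : dualDistrib k A' A' (φ ⊗ₜ β) (TensorProduct.map f g y) =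
      dualDistrib k A A ((φ ∘ₗ f) ⊗ₜ (β ∘ₗ g)) y := by
  induction y with
  | zero => simp
  | tmul a b => simp
  | add y z hy hz => rw [map_add, map_add, map_add, hy, hz]

lemma leftConv_mem_range_dualMap {k A A' : Type*} [Field k] [AddCommGroup A] [Module k A]
    [AddCommGroup A'] [Module k A'] {Δ : A →ₗ[k] A ⊗[k] A} {ρ : A →ₗ[k] A'}
    (hΔ : ∀ x, ρ x = 0 → TensorProduct.map ρ ρ (Δ x) = 0) {φ β : Module.Dual k A}
    (hφ : φ ∈ LinearMap.range ρ.dualMap) (hβ : β ∈ LinearMap.range ρ.dualMap) :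
    leftConv Δ φ β ∈ LinearMap.range ρ.dualMap := by
  obtain ⟨f, rfl⟩ := hφ
  obtain ⟨g, rfl⟩ := hβ
  rw [LinearMap.range_dualMap_eq_dualAnnihilator_ker, Submodule.mem_dualAnnihilator]
  intro x hx
  rw [leftConv_apply, LinearMap.dualMap_apply', LinearMap.dualMap_apply', ← dualDistrib_tmul_map,
    hΔ x hx, map_zero]

end General

variable {k ι : Type*} [CommRing k]

local notation "𝕋" => FreeAlgebra k ι
local notation "𝔵" => FreeAlgebra.ι k (X := ι)

/-- The braided comultiplication of the free algebra for the diagonal braiding `Q`: the letters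
are primitive and `Δ` is multiplicative for the tensor product twisted by `Q`.  Only products with
a letter on the left are recorded, where the twist is `sigma Q t`. -/
structure IsBraidedComul (Q : ι → ι → k) (Δ : 𝕋 →ₗ[k] 𝕋 ⊗[k] 𝕋) : Prop where
  one : Δ 1 = 1 ⊗ₜ 1
  ι_mul : ∀ t x, Δ (𝔵 t * x) = TensorProduct.map (LinearMap.mulLeft k (𝔵 t)) LinearMap.id (Δ x) +
    TensorProduct.map (sigma Q t).toLinearMap (LinearMap.mulLeft k (𝔵 t)) (Δ x)

namespace IsBraidedComul

variable {Q : ι → ι → k} {Δ : FreeAlgebra k ι →ₗ[k] FreeAlgebra k ι ⊗[k] FreeAlgebra k ι}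
  (hΔ : IsBraidedComul Q Δ)
include hΔ

lemma comul_word_mem_span (l : List ι) : Δ (word k l) ∈ Submodule.span k
    {y | ∃ a b : List ι, a.length + b.length = l.length ∧ word k a ⊗ₜ word k b = y} := by
  induction l with
  | nil =>
    rw [word_nil, hΔ.one]
    exact Submodule.subset_span ⟨[], [], rfl, rfl⟩
  | cons t l ih =>
    rw [word_cons, hΔ.ι_mul]
    refine add_mem ((Submodule.map_span_le _ _ _).2 ?_ (Submodule.mem_map_of_mem ih))
      ((Submodule.map_span_le _ _ _).2 ?_ (Submodule.mem_map_of_mem ih))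
    · rintro _ ⟨a, b, hab, rfl⟩
      exact Submodule.subset_span
        ⟨t :: a, b, by rw [List.length_cons, List.length_cons]; omega, by simp [word_cons]⟩
    · rintro _ ⟨a, b, hab, rfl⟩
      rw [TensorProduct.map_tmul, AlgHom.toLinearMap_apply, sigma_word, ← TensorProduct.smul_tmul']
      exact Submodule.smul_mem _ _ (Submodule.subset_span
        ⟨a, t :: b, by rw [List.length_cons, List.length_cons]; omega, by simp [word_cons]⟩)

lemma leftConv_mem_dualFil {m n : ℕ} {φ β : Module.Dual k 𝕋} (hφ : φ ∈ dualFil k ι m)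
    (hβ : β ∈ dualFil k ι n) : leftConv Δ φ β ∈ dualFil k ι (n + m) := fun l hl => by
  refine LinearMap.mem_ker.1 ((Submodule.span_le.2 ?_ :
    _ ≤ LinearMap.ker (dualDistrib k 𝕋 𝕋 (φ ⊗ₜ β))) (hΔ.comul_word_mem_span l))
  rintro _ ⟨a, b, hab, rfl⟩
  rw [SetLike.mem_coe, LinearMap.mem_ker, TensorProduct.dualDistrib_apply]
  by_cases ha : m < a.length
  · rw [hφ a ha, zero_mul]
  · rw [hβ b (by omega), mul_zero]

lemma leftConv_one (φ β : Module.Dual k 𝕋) : leftConv Δ φ β 1 = φ 1 * β 1 := by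
  rw [leftConv_apply, hΔ.one, TensorProduct.dualDistrib_apply]

lemma letterDer_leftConv (t : ι) (φ β : Module.Dual k 𝕋) : letterDer t (leftConv Δ φ β) =
    leftConv Δ (letterDer t φ) β +
      leftConv Δ (φ ∘ₗ (sigma Q t).toLinearMap) (letterDer t β) := by
  ext1 x
  rw [letterDer_apply, leftConv_apply, hΔ.ι_mul, map_add, dualDistrib_tmul_map,
    dualDistrib_tmul_map]
  rfl

lemma leftConv_coef_nil : leftConv Δ (coef k []) = 1 := by
  classical
  refine sub_eq_zero.1 (eq_zero_of_letterDer_comm (c := fun _ => 1) (fun β => ?_) fun t β => ?_)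
  · simp [hΔ.leftConv_one, coef_apply_one]
  · simp [hΔ.letterDer_leftConv, letterDer_coef_nil, coef_comp_sigma]

lemma leftConv_apply_coef_nil (φ : Module.Dual k 𝕋) : leftConv Δ φ (coef k []) = φ := by
  classical
  refine linearMap_ext_word fun l => ?_
  induction l generalizing φ with
  | nil => simp [word_nil, hΔ.leftConv_one, coef_apply_one]
  | cons t l ih =>
    rw [← letterDer_word, hΔ.letterDer_leftConv, letterDer_coef_nil, map_zero, add_zero, ih,
      letterDer_word]

lemma letterDer_leftConv_coef_cons [DecidableEq ι] (t t' : ι) (w : List ι) (β : Module.Dual k 𝕋) :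
    letterDer t (leftConv Δ (coef k (t' :: w)) β) = (if t = t' then leftConv Δ (coef k w) β else 0)
      + ((t' :: w).map (Q t)).prod • leftConv Δ (coef k (t' :: w)) (letterDer t β) := by
  rw [hΔ.letterDer_leftConv, letterDer_coef_cons, coef_comp_sigma, map_smul, LinearMap.smul_apply]
  split_ifs <;> simp

lemma letterDer_leftConv_coef_singleton [DecidableEq ι] (t t' : ι) (β : Module.Dual k 𝕋) :
    letterDer t (leftConv Δ (coef k [t']) β) = (if t = t' then β else 0)
      + Q t t' • leftConv Δ (coef k [t']) (letterDer t β) := by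
  simpa [hΔ.leftConv_coef_nil] using hΔ.letterDer_leftConv_coef_cons t t' [] β

lemma leftConv_coef_singleton_comm {i j : ι} (hij : i ≠ j) :
    leftConv Δ (coef k [j]) * leftConv Δ (coef k [i]) =
      Q i j • (leftConv Δ (coef k [i]) * leftConv Δ (coef k [j]))
        + (1 - Q i j * Q j i) • leftConv Δ (coef k [j, i]) := by
  classical
  refine sub_eq_zero.1 (eq_zero_of_letterDer_comm (c := fun t => Q t i * Q t j) (fun β => ?_)
    fun t β => ?_)
  · simp [hΔ.leftConv_one, coef_apply_one]
  · simp only [LinearMap.sub_apply, LinearMap.add_apply, LinearMap.smul_apply,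
      Module.End.mul_apply, map_sub, map_add, map_smul, hΔ.letterDer_leftConv_coef_singleton,
      hΔ.letterDer_leftConv_coef_cons, List.map_cons, List.map_nil, List.prod_cons, List.prod_nil]
    by_cases hti : t = i
    · subst hti
      simp only [if_true, if_neg hij, map_zero]
      module
    by_cases htj : t = j
    · subst htj
      simp only [if_true, if_neg hti, map_zero]
      module
    · simp only [if_neg hti, if_neg htj, map_zero]
      module

lemma leftConv_coef_singleton_coef_singleton (a b : ι) :
    leftConv Δ (coef k [b]) (coef k [a]) = coef k [b, a] + Q a b • coef k [a, b] := by
  classical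
  refine eq_of_letterDer ?_ fun t => ?_
  · simp [hΔ.leftConv_one, coef_apply_one]
  · rw [hΔ.letterDer_leftConv_coef_singleton, letterDer_coef_cons, map_add, map_smul,
      letterDer_coef_cons, letterDer_coef_cons]
    by_cases hta : t = a
    · subst hta
      rw [if_pos rfl, if_pos rfl, hΔ.leftConv_apply_coef_nil]
    · rw [if_neg hta, if_neg hta, map_zero, smul_zero, smul_zero]

end IsBraidedComul

theorem IsBraidedComul.rankTwoSystem {k ι : Type*} [Field k] {Q : ι → ι → k}
    {Δ : FreeAlgebra k ι →ₗ[k] FreeAlgebra k ι ⊗[k] FreeAlgebra k ι} (hΔ : IsBraidedComul Q Δ)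
    {𝓐 : Subalgebra k (Module.End k (Module.Dual k (FreeAlgebra k ι)))} {i j : ι} (hij : i ≠ j)
    (hi : leftConv Δ (coef k [i]) ∈ 𝓐) (hj : leftConv Δ (coef k [j]) ∈ 𝓐)
    (hji : leftConv Δ (coef k [j, i]) ∈ 𝓐) :
    RankTwoSystem 𝓐 (Q i i) (Q j j) (Q i j) (Q j i) (leftConv Δ (coef k [i]))
      (leftConv Δ (coef k [j])) (leftConv Δ (coef k [j, i])) (letterDer i) (letterDer j)
      (coef k []) := by
  classical
  exact {
    La_mem := hi
    Lb_mem := hj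
    Lc_mem := hji
    Ra_La m := by rw [hΔ.letterDer_leftConv_coef_singleton, if_pos rfl]
    Ra_Lb m := by rw [hΔ.letterDer_leftConv_coef_singleton, if_neg hij, zero_add]
    Rb_La m := by rw [hΔ.letterDer_leftConv_coef_singleton, if_neg hij.symm, zero_add]
    Rb_Lb m := by rw [hΔ.letterDer_leftConv_coef_singleton, if_pos rfl]
    Ra_Lc m := by simp [hΔ.letterDer_leftConv_coef_cons, hij]
    Rb_Lc m := by simp [hΔ.letterDer_leftConv_coef_cons, mul_comm]
    Lb_La := LinearMap.congr_fun (hΔ.leftConv_coef_singleton_comm hij)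
    Ra_vac := letterDer_coef_nil i
    Rb_vac := letterDer_coef_nil j
    vac_ne h := by simpa [coef_apply_one] using LinearMap.congr_fun h 1 }

end Convolution

section Filtration

variable {k M : Type*} [Field k] [AddCommGroup M] [Module k M]

/-- The operators that raise the filtration `𝓕` by at most `K`. -/
def raiseBy (𝓕 : ℕ → Submodule k M) (K : ℕ) : Submodule k (Module.End k M) where
  carrier := {T | ∀ n, ∀ m ∈ 𝓕 n, T m ∈ 𝓕 (n + K)}
  add_mem' hS hT n m hm := add_mem (hS n m hm) (hT n m hm)
  zero_mem' _ _ _ := zero_mem _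
  smul_mem' c _ hT n m hm := Submodule.smul_mem _ c (hT n m hm)

lemma monotone_raiseBy {𝓕 : ℕ → Submodule k M} (h𝓕 : Monotone 𝓕) : Monotone (raiseBy 𝓕) :=
  fun _ _ hK _ hT n m hm => h𝓕 (Nat.add_le_add_left hK n) (hT n m hm)

lemma mul_mem_raiseBy {𝓕 : ℕ → Submodule k M} {K K' : ℕ} {S T : Module.End k M}
    (hS : S ∈ raiseBy 𝓕 K) (hT : T ∈ raiseBy 𝓕 K') : S * T ∈ raiseBy 𝓕 (K' + K) :=
  fun n m hm => add_assoc n K' K ▸ hS _ _ (hT n m hm)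

lemma pow_le_raiseBy {𝓕 : ℕ → Submodule k M} {X : Submodule k (Module.End k M)} {K : ℕ}
    (hX : X ≤ raiseBy 𝓕 K) (n : ℕ) : X ^ n ≤ raiseBy 𝓕 (n * K) := by
  induction n with
  | zero =>
    rw [pow_zero, Submodule.one_le, zero_mul]
    exact fun _ _ hm => hm
  | succ n ih =>
    rw [pow_succ', Submodule.mul_le, Nat.succ_mul]
    exact fun S hS T hT => mul_mem_raiseBy (hX hS) (ih hT)

/-- The operators that raise the filtration `𝓕` by a bounded amount. -/
def filteredEnd {𝓕 : ℕ → Submodule k M} (h𝓕 : Monotone 𝓕) : Subalgebra k (Module.End k M) where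
  carrier := {T | ∃ K, T ∈ raiseBy 𝓕 K}
  mul_mem' := fun ⟨_, hS⟩ ⟨_, hT⟩ => ⟨_, mul_mem_raiseBy hS hT⟩
  add_mem' := fun ⟨_, hS⟩ ⟨_, hT⟩ => ⟨_, add_mem (monotone_raiseBy h𝓕 (le_max_left _ _) hS)
    (monotone_raiseBy h𝓕 (le_max_right _ _) hT)⟩
  algebraMap_mem' r := ⟨0, fun n _ hm => Submodule.smul_mem (𝓕 n) r hm⟩

lemma exists_le_raiseBy {𝓕 : ℕ → Submodule k M} {h𝓕 : Monotone 𝓕}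
    {X : Submodule k (Module.End k M)} (hfg : X.FG)
    (hX : X ≤ Subalgebra.toSubmodule (filteredEnd h𝓕)) : ∃ K, X ≤ raiseBy 𝓕 K := by
  induction X, hfg using Submodule.fg_induction with
  | singleton T =>
    obtain ⟨K, hK⟩ := hX (Submodule.mem_span_singleton_self T)
    exact ⟨K, (Submodule.span_singleton_le_iff_mem _ _).2 hK⟩
  | sup X₁ X₂ _ _ ih₁ ih₂ =>
    obtain ⟨K₁, hK₁⟩ := ih₁ (le_sup_left.trans hX)
    obtain ⟨K₂, hK₂⟩ := ih₂ (le_sup_right.trans hX)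
    exact ⟨max K₁ K₂, sup_le (hK₁.trans (monotone_raiseBy h𝓕 (le_max_left _ _)))
      (hK₂.trans (monotone_raiseBy h𝓕 (le_max_right _ _)))⟩

lemma HasStretchedGrowth.exists_two_pow_le_finrank {𝓕 : ℕ → Submodule k M} {h𝓕 : Monotone 𝓕}
    [∀ n, FiniteDimensional k (𝓕 n)] {vac : M} (h : HasStretchedGrowth (filteredEnd h𝓕) vac)
    (hvac : vac ∈ 𝓕 0) : ∃ C, ∀ L, 2 ^ L ≤ Module.finrank k (𝓕 (C * (L * L))) := by
  obtain ⟨X, hfg, hX, C, hC⟩ := h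
  obtain ⟨K, hK⟩ := exists_le_raiseBy hfg hX
  refine ⟨C * K, fun L => (hC L).trans (Submodule.finrank_mono (Submodule.map_le_iff_le_comap.2
    fun T hT => ?_))⟩
  have hmem := pow_le_raiseBy hK _ hT 0 vac hvac
  rwa [zero_add, mul_right_comm] at hmem

end Filtration

section Quotient

variable {k ι : Type*} [Field k] {B : Type*} [Ring B] [Algebra k B]

local notation "𝕋" => FreeAlgebra k ι
local notation "𝔵" => FreeAlgebra.ι k (X := ι)

lemma mem_range_dualMap {α : Module.Dual k 𝕋} {π : 𝕋 →ₐ[k] B} :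
    α ∈ LinearMap.range π.toLinearMap.dualMap ↔ ∀ x, π x = 0 → α x = 0 := by
  simp [LinearMap.range_dualMap_eq_dualAnnihilator_ker, Submodule.mem_dualAnnihilator]

/-- The functionals on the free algebra that factor through the quotient map `π` and vanish on all
words with more than `n` letters. -/
def quotDualFil (π : FreeAlgebra k ι →ₐ[k] B) (n : ℕ) : Submodule k (Module.Dual k 𝕋) :=
  LinearMap.range π.toLinearMap.dualMap ⊓ dualFil k ι n

lemma monotone_quotDualFil (π : 𝕋 →ₐ[k] B) : Monotone (quotDualFil π) := fun _ _ h =>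
  inf_le_inf_left _ (monotone_dualFil h)

lemma IsBraidedComul.leftConv_mem_filteredEnd {Q : ι → ι → k} {Δ : 𝕋 →ₗ[k] 𝕋 ⊗[k] 𝕋}
    (hΔ : IsBraidedComul Q Δ) {π : 𝕋 →ₐ[k] B}
    (hker : ∀ x, π x = 0 → TensorProduct.map π.toLinearMap π.toLinearMap (Δ x) = 0)
    {w : List ι} (hw : coef k w ∈ LinearMap.range π.toLinearMap.dualMap) :
    leftConv Δ (coef k w) ∈ filteredEnd (monotone_quotDualFil π) :=
  ⟨w.length, fun _ _ hβ => ⟨leftConv_mem_range_dualMap hker hw hβ.1,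
    hΔ.leftConv_mem_dualFil (coef_mem_dualFil w) hβ.2⟩⟩

lemma word_mem_pow {W : Submodule k 𝕋} (hone : 1 ≤ W) (hι : ∀ t, 𝔵 t ∈ W) {l : List ι} {n : ℕ}
    (hl : l.length ≤ n) : word k l ∈ W ^ n := by
  refine pow_le_pow_right' hone hl ?_
  induction l generalizing n with
  | nil => exact Submodule.one_le.1 le_rfl
  | cons t l ih =>
    rw [word_cons, List.length_cons, pow_succ']
    exact Submodule.mul_mem_mul (hι t) (ih le_rfl)

lemma exists_injective_quotDualFil (π : 𝕋 →ₐ[k] B) {n : ℕ} {W : Submodule k 𝕋}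
    (hW : ∀ l : List ι, l.length ≤ n → word k l ∈ W) :
    ∃ f : quotDualFil π n →ₗ[k] LinearMap.range (π.toLinearMap ∘ₗ W.subtype).dualMap,
      Function.Injective f := by
  refine ⟨(W.subtype.dualMap.domRestrict (quotDualFil π n)).codRestrict _ ?_,
    (injective_iff_map_eq_zero _).2 fun α hα => Subtype.ext (linearMap_ext_word fun l => ?_)⟩
  · rintro ⟨_, ⟨f, rfl⟩, _⟩
    exact ⟨f, rfl⟩
  · rcases le_or_gt l.length n with hl | hl
    · exact LinearMap.congr_fun (congrArg Subtype.val hα) ⟨_, hW l hl⟩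
    · exact α.2.2 l hl

variable [Finite ι]

lemma finiteDimensional_and_finrank_quotDualFil_le (π : 𝕋 →ₐ[k] B) (n : ℕ) :
    FiniteDimensional k (quotDualFil π n) ∧ Module.finrank k (quotDualFil π n) ≤ Module.finrank k
      (Submodule.span k (insert 1 (Set.range fun t => π (𝔵 t))) ^ n : Submodule k B) := by
  set Y : Submodule k 𝕋 := Submodule.span k (insert 1 (Set.range 𝔵)) with hY
  have hone : 1 ≤ Y := Submodule.one_le.2 (Submodule.subset_span (Set.mem_insert _ _))
  have hι (t : ι) : 𝔵 t ∈ Y := Submodule.subset_span (Set.mem_insert_of_mem _ ⟨t, rfl⟩)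
  have hfin : Module.Finite k (Y ^ n : Submodule k 𝕋) :=
    Module.Finite.iff_fg.2 ((Submodule.fg_span ((Set.finite_range _).insert 1)).pow n)
  have hmap : Y.map π.toLinearMap = Submodule.span k (insert 1 (Set.range fun t => π (𝔵 t))) := by
    rw [hY, Submodule.map_span, Set.image_insert_eq, ← Set.range_comp]
    simp [Function.comp_def]
  obtain ⟨f, hf⟩ := exists_injective_quotDualFil π (n := n) fun l hl => word_mem_pow hone hι hl
  refine ⟨Module.Finite.of_injective f hf, (LinearMap.finrank_le_finrank_of_injective hf).trans ?_⟩
  rw [LinearMap.finrank_range_dualMap_eq_finrank_range, LinearMap.range_comp,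
    Submodule.range_subtype, Submodule.map_pow, hmap]

end Quotient

section GKDimension

variable {k B : Type*} [Field k] [Ring B] [Algebra k B]

lemma eventually_pow_mul_lt_two_pow (C D : ℕ) :
    ∀ᶠ L : ℕ in Filter.atTop, (C * (L * L)) ^ D < 2 ^ L := by
  have h := (tendsto_pow_const_div_const_pow_of_one_lt (2 * D) (one_lt_two (α := ℝ))).const_mul
    ((C : ℝ) ^ D)
  rw [mul_zero] at h
  filter_upwards [h.eventually_lt_const one_pos] with L hL
  rw [← mul_div_assoc, div_lt_one (by positivity)] at hL
  have hL' : ((C * (L * L) : ℕ) : ℝ) ^ D < 2 ^ L := by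
    refine lt_of_eq_of_lt ?_ hL
    push_cast
    ring
  exact_mod_cast hL'

lemma exists_eventually_finrank_lt_pow (hGK : GKdim k B ≠ ⊤) {S : Set B} (hS : S.Finite) :
    ∃ D : ℕ, ∀ᶠ n : ℕ in Filter.atTop,
      Module.finrank k (Submodule.span k (insert 1 S) ^ n : Submodule k B) < n ^ D := by
  lift S to Finset B using hS
  have hlt := (le_iSup (fun S : Finset B => Filter.limsup (fun n : ℕ =>
    ENNReal.ofReal (Real.logb n (Module.finrank k
      ((Submodule.span k (insert (1 : B) (S : Set B))) ^ n : Submodule k B))))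
      Filter.atTop) S).trans_lt (lt_top_iff_ne_top.2 hGK)
  obtain ⟨D, hD⟩ := ENNReal.exists_nat_gt hlt.ne
  refine ⟨D, ?_⟩
  filter_upwards [Filter.eventually_lt_of_limsup_lt hD, Filter.eventually_gt_atTop 1] with n hn hn1
  rcases Nat.eq_zero_or_pos (Module.finrank k
    (Submodule.span k (insert (1 : B) (S : Set B)) ^ n : Submodule k B)) with h0 | hpos
  · rw [h0]
    positivity
  · have hD0 : D ≠ 0 := by rintro rfl; simp at hn
    rw [ENNReal.ofReal_lt_natCast hD0, Real.logb_lt_iff_lt_rpow (by exact_mod_cast hn1)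
      (by exact_mod_cast hpos), Real.rpow_natCast] at hn
    exact_mod_cast hn

lemma GKdim_eq_top_of_two_pow_le {S : Set B} (hS : S.Finite) {C : ℕ}
    (h : ∀ L, 2 ^ L ≤ Module.finrank k
      (Submodule.span k (insert 1 S) ^ (C * (L * L)) : Submodule k B)) : GKdim k B = ⊤ := by
  by_contra hGK
  obtain ⟨D, hD⟩ := exists_eventually_finrank_lt_pow hGK hS
  set U : Submodule k B := Submodule.span k (insert 1 S)
  have hC : 0 < C := by
    refine Nat.pos_of_ne_zero fun hC => ?_
    have h0 := h (Module.finrank k (U ^ 0 : Submodule k B))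
    rw [hC, zero_mul] at h0
    exact Nat.lt_two_pow_self.not_ge h0
  have htend : Filter.Tendsto (fun L : ℕ => C * (L * L)) Filter.atTop Filter.atTop :=
    Filter.tendsto_atTop_mono (fun L => (Nat.le_mul_self L).trans
      (Nat.le_mul_of_pos_left _ hC)) Filter.tendsto_id
  obtain ⟨L, hlt, hpow⟩ :=
    ((htend.eventually hD).and (eventually_pow_mul_lt_two_pow C D)).exists
  exact absurd (h L) (hlt.trans hpow).not_ge

theorem GKdim_eq_top_of_hasStretchedGrowth {ι : Type*} [Finite ι] {π : FreeAlgebra k ι →ₐ[k] B}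
    (hnil : coef k [] ∈ LinearMap.range π.toLinearMap.dualMap)
    (h : HasStretchedGrowth (filteredEnd (monotone_quotDualFil π)) (coef k [])) :
    GKdim k B = ⊤ := by
  have hfin n := (finiteDimensional_and_finrank_quotDualFil_le π n).1
  obtain ⟨C, hC⟩ := h.exists_two_pow_le_finrank ⟨hnil, coef_mem_dualFil []⟩
  exact GKdim_eq_top_of_two_pow_le (Set.finite_range _) fun L =>
    (hC L).trans (finiteDimensional_and_finrank_quotDualFil_le π _).2

end GKDimension

section Homogeneous

variable {k : Type*} [Field k] {θ : ℕ}

local notation "𝕋" => FreeAlgebra k (Fin θ)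
local notation "𝔵" => FreeAlgebra.ι k (X := Fin θ)

lemma word_mem_piece (l : List (Fin θ)) : word k l ∈ piece k θ (fun a => l.count a) :=
  Submodule.subset_span ⟨l, fun _ => rfl, rfl⟩

lemma one_mem_piece : (1 : 𝕋) ∈ piece k θ 0 :=
  Submodule.subset_span ⟨[], fun _ => rfl, rfl⟩

lemma ι_mem_piece (t : Fin θ) : 𝔵 t ∈ piece k θ (Pi.single t 1) :=
  Submodule.subset_span ⟨[t], fun a => by
    rcases eq_or_ne t a with rfl | h <;> simp [*, Ne.symm], by simp⟩

lemma qb_zero_left (Q : Fin θ → Fin θ → kˣ) (γ : Fin θ → ℤ) : qb Q 0 γ = 1 := by simp [qb]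

lemma qb_single_count (Q : Fin θ → Fin θ → kˣ) (t : Fin θ) (l : List (Fin θ)) :
    qb Q (Pi.single t 1) (fun a => l.count a) = (l.map (Q t)).prod := by
  rw [qb, Finset.prod_eq_single t (fun a _ ha => by simp [ha]) (by simp),
    Finset.prod_list_map_count, ← Finset.prod_subset (Finset.subset_univ l.toFinset)]
  · simp
  · exact fun b _ hb => by simp [List.count_eq_zero.2 (mt List.mem_toFinset.2 hb)]

lemma tensor_ext_word {N : Type*} [AddCommGroup N] [Module k N] {f g : 𝕋 ⊗[k] 𝕋 →ₗ[k] N}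
    (h : ∀ l x, f (word k l ⊗ₜ x) = g (word k l ⊗ₜ x)) : f = g :=
  TensorProduct.ext' fun y x => LinearMap.congr_fun (linearMap_ext_word
    (α := f ∘ₗ (TensorProduct.mk k 𝕋 𝕋).flip x) (β := g ∘ₗ (TensorProduct.mk k 𝕋 𝕋).flip x)
    fun l => h l x) y

lemma isBraidedComul_of_mul {Q : Fin θ → Fin θ → kˣ}
    {m2 : (𝕋 ⊗[k] 𝕋) →ₗ[k] (𝕋 ⊗[k] 𝕋) →ₗ[k] (𝕋 ⊗[k] 𝕋)}
    (hm2 : ∀ (a b c d : 𝕋) (β γ : Fin θ → ℤ), b ∈ piece k θ β → c ∈ piece k θ γ →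
      m2 (a ⊗ₜ b) (c ⊗ₜ d) = (qb Q β γ : k) • ((a * c) ⊗ₜ[k] (b * d)))
    {Δ : 𝕋 →ₗ[k] 𝕋 ⊗[k] 𝕋} (hΔmul : ∀ x y, Δ (x * y) = m2 (Δ x) (Δ y)) (hΔone : Δ 1 = 1 ⊗ₜ 1)
    (hΔgen : ∀ a : Fin θ, Δ (𝔵 a) = 𝔵 a ⊗ₜ 1 + 1 ⊗ₜ 𝔵 a) :
    IsBraidedComul (fun s t => (Q s t : k)) Δ where
  one := hΔone
  ι_mul t x := by
    rw [hΔmul, hΔgen, map_add, LinearMap.add_apply]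
    congr 1
    · refine LinearMap.congr_fun (tensor_ext_word fun l d => ?_) (Δ x)
      simp [hm2 _ _ _ _ _ _ one_mem_piece (word_mem_piece l), qb_zero_left]
    · refine LinearMap.congr_fun (tensor_ext_word fun l d => ?_) (Δ x)
      have hprod : ((l.map (Q t)).prod : k) = (l.map fun b => (Q t b : k)).prod := by
        rw [← Units.coeHom_apply, map_list_prod, List.map_map]
        rfl
      simp [hm2 _ _ _ _ _ _ (ι_mem_piece t) (word_mem_piece l), qb_single_count, hprod, sigma_word,
        TensorProduct.smul_tmul']

lemma coef_eq_zero_of_mem_piece {w : List (Fin θ)} {d : Fin θ → ℤ}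
    (hd : d ≠ fun a => (w.count a : ℤ)) {y : 𝕋} (hy : y ∈ piece k θ d) : coef k w y = 0 := by
  refine LinearMap.mem_ker.1 ((Submodule.span_le.2 ?_ : piece k θ d ≤ _) hy)
  rintro _ ⟨l, hl, rfl⟩
  refine (coef_word w l).trans (if_neg ?_)
  rintro rfl
  exact hd (funext fun a => (hl a).symm)

lemma piece_count_le (w : List (Fin θ)) :
    piece k θ (fun a => w.count a) ≤ Submodule.span k (word k '' {l | l.Perm w}) := by
  refine Submodule.span_mono ?_
  rintro _ ⟨l, hl, rfl⟩
  exact ⟨l, List.perm_iff_count.2 fun a => Int.ofNat_inj.1 (hl a), rfl⟩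

variable {B : Type*} [Ring B] [Algebra k B] {π : FreeAlgebra k (Fin θ) →ₐ[k] B}
  (hhom : ∀ x, π x = 0 → x ∈ Submodule.span k {y | π y = 0 ∧ ∃ d, y ∈ piece k θ d})
include hhom

lemma coef_mem_range_dualMap {w : List (Fin θ)}
    (h : ∀ y ∈ Submodule.span k (word k '' {l | l.Perm w}), π y = 0 → coef k w y = 0) :
    coef k w ∈ LinearMap.range π.toLinearMap.dualMap := by
  refine mem_range_dualMap.2 fun x hx => LinearMap.mem_ker.1 (Submodule.span_le.2 ?_ (hhom x hx))
  rintro y ⟨hy, d, hd⟩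
  by_cases hdw : d = fun a => (w.count a : ℤ)
  · exact h y (piece_count_le w (hdw ▸ hd)) hy
  · exact coef_eq_zero_of_mem_piece hdw hd

variable (htriv : ∀ (a : k) (v : Fin θ → k),
  π (algebraMap k (FreeAlgebra k (Fin θ)) a + ∑ s, v s • FreeAlgebra.ι k s) = 0 → a = 0 ∧ v = 0)
include htriv

lemma coef_nil_mem_range_dualMap : coef k [] ∈ LinearMap.range π.toLinearMap.dualMap := by
  refine coef_mem_range_dualMap hhom fun y hy hπy => ?_
  simp only [List.perm_nil, Set.ofPred_eq_eq_singleton, Set.image_singleton] at hy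
  obtain ⟨c, rfl⟩ := Submodule.mem_span_singleton.1 hy
  have hc : c = 0 := (htriv c 0 (by
    rw [word_nil] at hπy
    simpa [Algebra.algebraMap_eq_smul_one] using hπy)).1
  rw [hc, zero_smul, map_zero]

lemma coef_singleton_mem_range_dualMap (t : Fin θ) :
    coef k [t] ∈ LinearMap.range π.toLinearMap.dualMap := by
  refine coef_mem_range_dualMap hhom fun y hy hπy => ?_
  simp only [List.perm_singleton, Set.ofPred_eq_eq_singleton, Set.image_singleton] at hy
  obtain ⟨c, rfl⟩ := Submodule.mem_span_singleton.1 hy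
  have hc := (htriv 0 (Pi.single t c) (by
    rw [word_cons, word_nil, mul_one] at hπy
    simpa [Pi.single_apply, ite_smul] using hπy)).2
  rw [Pi.single_eq_zero_iff] at hc
  rw [hc, zero_smul, map_zero]

lemma coef_pair_mem_range_dualMap {Q : Fin θ → Fin θ → k} {Δ : 𝕋 →ₗ[k] 𝕋 ⊗[k] 𝕋}
    (hΔ : IsBraidedComul Q Δ)
    (hker : ∀ x, π x = 0 → TensorProduct.map π.toLinearMap π.toLinearMap (Δ x) = 0)
    {a b : Fin θ} (hab : a ≠ b) (hne : π (𝔵 a * 𝔵 b - Q a b • (𝔵 b * 𝔵 a)) ≠ 0) :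
    coef k [b, a] ∈ LinearMap.range π.toLinearMap.dualMap := by
  refine coef_mem_range_dualMap hhom fun y hy hπy => ?_
  have hperm : {l : List (Fin θ) | l.Perm [b, a]} = {[b, a], [a, b]} :=
    Set.ext fun l => List.perm_pair
  rw [hperm, Set.image_pair] at hy
  obtain ⟨β, α, rfl⟩ := Submodule.mem_span_pair.1 hy
  -- The convolution of the coefficients of `b` and `a` also kills `ker π`, and it takes the values
  -- `1` on `x_b x_a` and `Q a b` on `x_a x_b`; so `y` is a multiple of the braided commutator.
  have hconv := mem_range_dualMap.1 (leftConv_mem_range_dualMap (ρ := π.toLinearMap) hker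
    (coef_singleton_mem_range_dualMap hhom htriv b)
    (coef_singleton_mem_range_dualMap hhom htriv a)) _ hπy
  rw [hΔ.leftConv_coef_singleton_coef_singleton] at hconv
  have hβ : β = -(α * Q a b) := by
    simp only [LinearMap.add_apply, map_add, map_smul, coef_word, ↓reduceIte, smul_eq_mul, mul_one,
      List.cons.injEq, hab, hab.symm, and_true, and_self, mul_zero, add_zero, LinearMap.smul_apply,
      zero_add] at hconv
    linear_combination hconv
  have hα : α • π (𝔵 a * 𝔵 b - Q a b • (𝔵 b * 𝔵 a)) = 0 := by
    rw [← map_smul, ← hπy, hβ, word_cons, word_cons, word_cons, word_cons, word_nil, mul_one,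
      mul_one]
    congr 1
    module
  have hα0 := (smul_eq_zero.1 hα).resolve_right hne
  simp [hβ, hα0]

end Homogeneous

lemma mul_sub_smul_mul_ne_zero {k A : Type*} [CommRing k] [Ring A] [Algebra k A] {s s' : k}
    (hs : s * s' = 1) {x y : A} (h : x * y - s • (y * x) ≠ 0) : y * x - s' • (x * y) ≠ 0 := by
  refine fun h0 => h ?_
  rw [sub_eq_zero.1 h0, smul_smul, hs, one_smul, sub_self]

theorem stmt12_general {k : Type*} [Field k] [CharZero k] {θ : ℕ}
    (Q : Fin θ → Fin θ → kˣ) (i j : Fin θ) (hij : i ≠ j) (hQ : Q i j * Q j i = 1)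
    (hord : orderOf (Q i i) = 0 ∨ orderOf (Q j j) = 0
      ∨ 4 < orderOf (Q i i) + orderOf (Q j j))
    (m2 : (FreeAlgebra k (Fin θ) ⊗[k] FreeAlgebra k (Fin θ))
      →ₗ[k] (FreeAlgebra k (Fin θ) ⊗[k] FreeAlgebra k (Fin θ))
      →ₗ[k] (FreeAlgebra k (Fin θ) ⊗[k] FreeAlgebra k (Fin θ)))
    (hm2 : ∀ (a b c d : FreeAlgebra k (Fin θ)) (β γ : Fin θ → ℤ),
      b ∈ piece k θ β → c ∈ piece k θ γ →
      m2 (a ⊗ₜ b) (c ⊗ₜ d) = (qb Q β γ : k) • ((a * c) ⊗ₜ[k] (b * d)))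
    (Δ : FreeAlgebra k (Fin θ) →ₗ[k] FreeAlgebra k (Fin θ) ⊗[k] FreeAlgebra k (Fin θ))
    (hΔmul : ∀ x y, Δ (x * y) = m2 (Δ x) (Δ y))
    (hΔone : Δ 1 = 1 ⊗ₜ 1)
    (hΔgen : ∀ a : Fin θ, Δ (FreeAlgebra.ι k a)
      = FreeAlgebra.ι k a ⊗ₜ 1 + 1 ⊗ₜ FreeAlgebra.ι k a)
    {B : Type*} [Ring B] [Algebra k B]
    (π : FreeAlgebra k (Fin θ) →ₐ[k] B)
    (hhom : ∀ x, π x = 0 →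
      x ∈ Submodule.span k {y | π y = 0 ∧ ∃ d, y ∈ piece k θ d})
    (htriv : ∀ (a : k) (v : Fin θ → k),
      π (algebraMap k (FreeAlgebra k (Fin θ)) a + ∑ s, v s • FreeAlgebra.ι k s) = 0 →
      a = 0 ∧ v = 0)
    (hhopf : ∀ x, π x = 0 →
      TensorProduct.map π.toLinearMap π.toLinearMap (Δ x) = 0)
    (hGK : GKdim k B ≠ ⊤) :
    π (FreeAlgebra.ι k i * FreeAlgebra.ι k j
        - (Q i j : k) • (FreeAlgebra.ι k j * FreeAlgebra.ι k i)) = 0 := by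
  by_contra hij_ne
  have hs : (Q i j : k) * Q j i = 1 := by rw [← Units.val_mul, hQ, Units.val_one]
  have hji_ne : π (FreeAlgebra.ι k j * FreeAlgebra.ι k i
      - (Q j i : k) • (FreeAlgebra.ι k i * FreeAlgebra.ι k j)) ≠ 0 := by
    simp only [map_sub, map_smul, map_mul] at hij_ne ⊢
    exact mul_sub_smul_mul_ne_zero hs hij_ne
  have hΔ := isBraidedComul_of_mul hm2 hΔmul hΔone hΔgen
  have hletter t := hΔ.leftConv_mem_filteredEnd hhopf
    (coef_singleton_mem_range_dualMap hhom htriv t)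
  have hpair {a b : Fin θ} (hab : a ≠ b) (hne) := hΔ.leftConv_mem_filteredEnd hhopf
    (coef_pair_mem_range_dualMap hhom htriv hΔ hhopf hab hne)
  have H := hΔ.rankTwoSystem hij (hletter i) (hletter j) (hpair hij hij_ne)
  have H' := hΔ.rankTwoSystem hij.symm (hletter j) (hletter i) (hpair hij.symm hji_ne)
  exact hGK (GKdim_eq_top_of_hasStretchedGrowth (coef_nil_mem_range_dualMap hhom htriv)
    (H.hasStretchedGrowth H' hs (Units.ne_zero _) (Units.ne_zero _)
      (by simpa only [orderOf_units] using hord)))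

/-- Let `q = (q_ij)` satisfy `q_ij q_ji = 1` for all `i ≠ j`
(a quantum linear space).  Suppose `i ≠ j` are such that `ord(q_ii) + ord(q_jj) > 4`
(orders in `ℕ ∪ {∞}`; `orderOf = 0` encodes infinite order).  Then in any pre-Nichols
algebra `B` of `q` with finite GK-dimension — i.e. any quotient of `T(V)` by a
`ℤ^θ`-homogeneous braided Hopf ideal intersecting `k ⊕ V` trivially, where the
braided comultiplication `Δ` of `T(V)` is the algebra map for the twisted product
determined by the bicharacter, with primitive generators —
one has `x_ij = x_i x_j − q_ij x_j x_i = 0`. -/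
theorem stmt12 {k : Type*} [Field k] [CharZero k] [IsAlgClosed k] {θ : ℕ}
    (Q : Fin θ → Fin θ → kˣ)
    (hqls : ∀ a b, a ≠ b → Q a b * Q b a = 1)
    (i j : Fin θ) (hij : i ≠ j)
    (hord : orderOf (Q i i) = 0 ∨ orderOf (Q j j) = 0
      ∨ 4 < orderOf (Q i i) + orderOf (Q j j))
    (m2 : (FreeAlgebra k (Fin θ) ⊗[k] FreeAlgebra k (Fin θ))
      →ₗ[k] (FreeAlgebra k (Fin θ) ⊗[k] FreeAlgebra k (Fin θ))
      →ₗ[k] (FreeAlgebra k (Fin θ) ⊗[k] FreeAlgebra k (Fin θ)))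
    (hm2 : ∀ (a b c d : FreeAlgebra k (Fin θ)) (β γ : Fin θ → ℤ),
      b ∈ piece k θ β → c ∈ piece k θ γ →
      m2 (a ⊗ₜ b) (c ⊗ₜ d) = (qb Q β γ : k) • ((a * c) ⊗ₜ[k] (b * d)))
    (Δ : FreeAlgebra k (Fin θ) →ₗ[k] FreeAlgebra k (Fin θ) ⊗[k] FreeAlgebra k (Fin θ))
    (hΔmul : ∀ x y, Δ (x * y) = m2 (Δ x) (Δ y))
    (hΔone : Δ 1 = 1 ⊗ₜ 1)
    (hΔgen : ∀ a : Fin θ, Δ (FreeAlgebra.ι k a)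
      = FreeAlgebra.ι k a ⊗ₜ 1 + 1 ⊗ₜ FreeAlgebra.ι k a)
    {B : Type*} [Ring B] [Algebra k B]
    (π : FreeAlgebra k (Fin θ) →ₐ[k] B)
    (hsurj : Function.Surjective π)
    (hhom : ∀ x, π x = 0 →
      x ∈ Submodule.span k {y | π y = 0 ∧ ∃ d, y ∈ piece k θ d})
    (htriv : ∀ (a : k) (v : Fin θ → k),
      π (algebraMap k (FreeAlgebra k (Fin θ)) a + ∑ s, v s • FreeAlgebra.ι k s) = 0 →
      a = 0 ∧ v = 0)
    (hhopf : ∀ x, π x = 0 →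
      TensorProduct.map π.toLinearMap π.toLinearMap (Δ x) = 0)
    (hGK : GKdim k B ≠ ⊤) :
    π (FreeAlgebra.ι k i * FreeAlgebra.ι k j
        - (Q i j : k) • (FreeAlgebra.ι k j * FreeAlgebra.ι k i)) = 0 :=
  stmt12_general Q i j hij (hqls i j hij) hord m2 hm2 Δ hΔmul hΔone hΔgen π hhom htriv hhopf hGK

end
end

section
/- Let q be a braiding matrix of Cartan type A_2 at a primitive third root of unity q (so q_11 = q_22 = q, q_12 q_21 = q^{-1}, ord q = 3). In the quotient B̂ = T(V)/⟨x_{1112}, x_{2221}, x_{2112}, x_{1221}⟩, for each i ≠ j ∈ {1,2} the relations [x_{ij}, x_{iij}]_c = 0, [x_{ij}, x_{jji}]_c = 0, and [x_{iij}, x_{jji}]_c = 0 hold. -/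
noncomputable section

namespace Stmt13

variable {k : Type*} [Field k]

/-- The bicharacter on `ℤ²` extending a braiding matrix `Q`. -/
def qb (Q : Fin 2 → Fin 2 → k) (α β : Fin 2 → ℤ) : k :=
  ∏ a, ∏ b, Q a b ^ (α a * β b)

/-- Degree of the generator `x_a`. -/
def ee (a : Fin 2) : Fin 2 → ℤ := Pi.single a 1

/-- Braided commutator of two homogeneous elements carried with their degrees:
`[u,v]_c = u v − q(α,β) v u`. -/
def brk (Q : Fin 2 → Fin 2 → k) (p r : FreeAlgebra k (Fin 2) × (Fin 2 → ℤ)) :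
    FreeAlgebra k (Fin 2) × (Fin 2 → ℤ) :=
  (p.1 * r.1 - qb Q p.2 r.2 • (r.1 * p.1), p.2 + r.2)

/-- The generator `x_a` together with its degree. -/
def gen (a : Fin 2) : FreeAlgebra k (Fin 2) × (Fin 2 → ℤ) :=
  (FreeAlgebra.ι k a, ee a)

end Stmt13

open Stmt13

/-! The braided Jacobi identity expresses `[[u,v]_c,w]_c` through `[u,w]_c` and `[v,w]_c`, so the
homogeneous elements that braided-commute with a fixed `w` are closed under the braided commutator.
The defining relations of `B̂` say exactly that both generators braided-commute with `x_iij` and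
with `x_jji`.  Hence so does `x_ij = [x_i, x_j]_c`, and then `x_iij = [x_i, x_ij]_c`
braided-commutes with `x_jji`. -/

namespace Stmt13

section BraidedCommutator

variable {k : Type*} [Field k] {Q : Fin 2 → Fin 2 → k}

theorem qb_add_left (hQ : ∀ a b, Q a b ≠ 0) (α β γ : Fin 2 → ℤ) :
    qb Q (α + β) γ = qb Q α γ * qb Q β γ := by
  simp only [qb, ← Finset.prod_mul_distrib, Pi.add_apply, add_mul, zpow_add₀ (hQ _ _)]

theorem qb_add_right (hQ : ∀ a b, Q a b ≠ 0) (α β γ : Fin 2 → ℤ) :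
    qb Q α (β + γ) = qb Q α β * qb Q α γ := by
  simp only [qb, ← Finset.prod_mul_distrib, Pi.add_apply, mul_add, zpow_add₀ (hQ _ _)]

theorem brk_jacobi (hQ : ∀ a b, Q a b ≠ 0) (u v w : FreeAlgebra k (Fin 2) × (Fin 2 → ℤ)) :
    (brk Q (brk Q u v) w).1 =
      (brk Q u (brk Q v w)).1 - qb Q u.2 v.2 • (v.1 * (brk Q u w).1)
        + qb Q v.2 w.2 • ((brk Q u w).1 * v.1) := by
  simp only [brk, qb_add_left hQ, qb_add_right hQ, mul_sub, sub_mul, smul_sub, mul_smul_comm,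
    smul_mul_assoc, mul_assoc]
  module

variable {B : Type*} [Ring B] [Algebra k B] (φ : FreeAlgebra k (Fin 2) →ₐ[k] B)

theorem map_brk (u v : FreeAlgebra k (Fin 2) × (Fin 2 → ℤ)) :
    φ (brk Q u v).1 = φ u.1 * φ v.1 - qb Q u.2 v.2 • (φ v.1 * φ u.1) := by
  simp only [brk, map_sub, map_smul, map_mul]

theorem map_brk_brk_left_eq_zero (hQ : ∀ a b, Q a b ≠ 0)
    {u v w : FreeAlgebra k (Fin 2) × (Fin 2 → ℤ)}
    (huw : φ (brk Q u w).1 = 0) (hvw : φ (brk Q v w).1 = 0) :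
    φ (brk Q (brk Q u v) w).1 = 0 := by
  have huvw : φ (brk Q u (brk Q v w)).1 = 0 := by
    rw [map_brk, hvw, mul_zero, zero_mul, smul_zero, sub_zero]
  simp [brk_jacobi hQ, huvw, huw]

end BraidedCommutator

theorem braidingMatrix_ne_zero {k : Type*} [Field k] {q q12 q21 : k} (hq : q ≠ 0)
    (hq21 : q12 * q21 = q⁻¹) (a b : Fin 2) :
    (![![q, q12], ![q21, q]] : Fin 2 → Fin 2 → k) a b ≠ 0 := by
  obtain ⟨h12, h21⟩ : q12 ≠ 0 ∧ q21 ≠ 0 := mul_ne_zero_iff.mp (hq21 ▸ inv_ne_zero hq)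
  fin_cases a <;> fin_cases b <;> assumption

end Stmt13

theorem stmt13_general {k : Type*} [Field k]
    (Q : Fin 2 → Fin 2 → k) (hQ : ∀ a b, Q a b ≠ 0)
    (rel : FreeAlgebra k (Fin 2) → FreeAlgebra k (Fin 2) → Prop)
    (hrel : rel = fun a b => b = 0 ∧
      (a = (brk Q (gen 0) (brk Q (gen 0) (brk Q (gen 0) (gen 1)))).1
        ∨ a = (brk Q (gen 1) (brk Q (gen 1) (brk Q (gen 1) (gen 0)))).1
        ∨ a = (brk Q (gen 1) (brk Q (gen 0) (brk Q (gen 0) (gen 1)))).1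
        ∨ a = (brk Q (gen 0) (brk Q (gen 1) (brk Q (gen 1) (gen 0)))).1)) :
    ∀ i j : Fin 2, i ≠ j →
      RingQuot.mkAlgHom k rel
          (brk Q (brk Q (gen i) (gen j)) (brk Q (gen i) (brk Q (gen i) (gen j)))).1 = 0
      ∧ RingQuot.mkAlgHom k rel
          (brk Q (brk Q (gen i) (gen j)) (brk Q (gen j) (brk Q (gen j) (gen i)))).1 = 0
      ∧ RingQuot.mkAlgHom k rel
          (brk Q (brk Q (gen i) (brk Q (gen i) (gen j)))
            (brk Q (gen j) (brk Q (gen j) (gen i)))).1 = 0 := by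
  have hrel_zero : ∀ u, rel u 0 → RingQuot.mkAlgHom k rel u = 0 := fun u hu => by
    rw [RingQuot.mkAlgHom_rel k hu, map_zero]
  have hdefining : ∀ i j, i ≠ j →
      rel (brk Q (gen i) (brk Q (gen i) (brk Q (gen i) (gen j)))).1 0 ∧
        rel (brk Q (gen j) (brk Q (gen i) (brk Q (gen i) (gen j)))).1 0 := by
    intro i j hij
    rw [hrel]
    fin_cases i <;> fin_cases j <;> simp_all
  intro i j hij
  have hi_iij := hrel_zero _ (hdefining i j hij).1
  have hj_iij := hrel_zero _ (hdefining i j hij).2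
  have hj_jji := hrel_zero _ (hdefining j i hij.symm).1
  have hi_jji := hrel_zero _ (hdefining j i hij.symm).2
  have hij_jji := map_brk_brk_left_eq_zero _ hQ hi_jji hj_jji
  exact ⟨map_brk_brk_left_eq_zero _ hQ hi_iij hj_iij, hij_jji,
    map_brk_brk_left_eq_zero _ hQ hi_jji hij_jji⟩

/-- Let `q` be of Cartan type `A_2` at a primitive third root of
unity `q` (`q_11 = q_22 = q`, `q_12 q_21 = q⁻¹`, `ord q = 3`).  In the quotient
`B̂ = T(V)/⟨x_1112, x_2221, x_2112, x_1221⟩`, for each `i ≠ j` the relations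
`[x_ij, x_iij]_c = 0`, `[x_ij, x_jji]_c = 0` and `[x_iij, x_jji]_c = 0` hold. -/
theorem stmt13 {k : Type*} [Field k] [CharZero k]
    (q q12 q21 : k) (hq3 : q ^ 3 = 1) (hq1 : q ≠ 1) (hq12 : q12 ≠ 0)
    (hq21 : q12 * q21 = q⁻¹)
    (Q : Fin 2 → Fin 2 → k) (hQ : Q = ![![q, q12], ![q21, q]])
    (rel : FreeAlgebra k (Fin 2) → FreeAlgebra k (Fin 2) → Prop)
    (hrel : rel = fun a b => b = 0 ∧
      (a = (brk Q (gen 0) (brk Q (gen 0) (brk Q (gen 0) (gen 1)))).1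
        ∨ a = (brk Q (gen 1) (brk Q (gen 1) (brk Q (gen 1) (gen 0)))).1
        ∨ a = (brk Q (gen 1) (brk Q (gen 0) (brk Q (gen 0) (gen 1)))).1
        ∨ a = (brk Q (gen 0) (brk Q (gen 1) (brk Q (gen 1) (gen 0)))).1)) :
    ∀ i j : Fin 2, i ≠ j →
      RingQuot.mkAlgHom k rel
          (brk Q (brk Q (gen i) (gen j)) (brk Q (gen i) (brk Q (gen i) (gen j)))).1 = 0
      ∧ RingQuot.mkAlgHom k rel
          (brk Q (brk Q (gen i) (gen j)) (brk Q (gen j) (brk Q (gen j) (gen i)))).1 = 0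
      ∧ RingQuot.mkAlgHom k rel
          (brk Q (brk Q (gen i) (brk Q (gen i) (gen j)))
            (brk Q (gen j) (brk Q (gen j) (gen i)))).1 = 0 := by
  have hq0 : q ≠ 0 := ne_zero_pow three_ne_zero (hq3 ▸ one_ne_zero)
  exact stmt13_general Q (hQ ▸ braidingMatrix_ne_zero hq0 hq21) rel hrel

end
end

section
/- In the tensor algebra T(V) of type A_2 with q of order 3 (q_11 = q_22 = q, q_12 q_21 = q^{-1}), the following comultiplication formula holds: Δ(x_{12}^3) = x_{12}^3 ⊗ 1 + 1 ⊗ x_{12}^3 + (q^{-1} − q^{-2}) x_{112} ⊗ x_{221} + (1 − q^{-1})^3 q_21^3 x_1^3 ⊗ x_2^3 + (1 − q)^2 q_21^3 x_{1112} ⊗ x_2^2 − (1 − q^{-1})^2 q^{-1} x_1^2 ⊗ x_{2221} + (q − 1) x_1 ⊗ [x_{12}, x_{221}]_c − (1 − q^{-1}) q_21 [x_{12}, x_{112}]_c ⊗ x_2. -/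
open scoped TensorProduct

noncomputable section

namespace Stmt15

variable {k : Type*} [Field k]

/-- The `ℤ²`-homogeneous component of degree `d` of the free algebra (tensor algebra):
the span of the words in the generators with letter-count vector `d`. -/
def piece (k : Type*) [Field k] (d : Fin 2 → ℤ) : Submodule k (FreeAlgebra k (Fin 2)) :=
  Submodule.span k {y | ∃ l : List (Fin 2),
    (∀ i, (l.count i : ℤ) = d i) ∧ y = (l.map (FreeAlgebra.ι k)).prod}

/-- The bicharacter on `ℤ²` extending a braiding matrix `Q`. -/
def qb (Q : Fin 2 → Fin 2 → k) (α β : Fin 2 → ℤ) : k :=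
  ∏ a, ∏ b, Q a b ^ (α a * β b)

/-- Degree of the generator `x_a`. -/
def ee (a : Fin 2) : Fin 2 → ℤ := Pi.single a 1

/-- Braided commutator of two homogeneous elements carried with their degrees. -/
def brk (Q : Fin 2 → Fin 2 → k) (p r : FreeAlgebra k (Fin 2) × (Fin 2 → ℤ)) :
    FreeAlgebra k (Fin 2) × (Fin 2 → ℤ) :=
  (p.1 * r.1 - qb Q p.2 r.2 • (r.1 * p.1), p.2 + r.2)

/-- The generator `x_a` together with its degree. -/
def gen (a : Fin 2) : FreeAlgebra k (Fin 2) × (Fin 2 → ℤ) :=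
  (FreeAlgebra.ι k a, ee a)

end Stmt15

open Stmt15

/-!
For primitive homogeneous `p`, `r` the braided commutator `u = [p, r]_c` satisfies
`Δ u = u ⊗ 1 + (1 - χ(p, r) χ(r, p)) p ⊗ r + 1 ⊗ u`, so `Δ (u ^ 3)` is the braided cube of a
sum `A + B + C` of three terms. Since `C A = χ(u, u) A C = q A C`, the mixed terms in `A` and `C`
alone carry the factor `1 + q + q ^ 2 = 0`. In most of the remaining bidegrees one tensor factor is
a sum such as `u ^ 2 p + s u p u + s ^ 2 p u ^ 2`. Because
`T ^ 2 + s T + s ^ 2 = (T - q s) (T - q ^ 2 s)`, such a sum is a twofold skew commutator, and for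
the `s` that occur it is a multiple of a braided one.
-/

namespace Stmt15

lemma one_add_add_sq_eq_zero {R : Type*} [Ring R] [NoZeroDivisors R] {q : R} (hq3 : q ^ 3 = 1)
    (hq1 : q ≠ 1) : 1 + q + q ^ 2 = 0 := by
  have hfactor : (q - 1) * (1 + q + q ^ 2) = q ^ 3 - 1 := by noncomm_ring
  exact (mul_eq_zero.mp (hfactor.trans (sub_eq_zero.mpr hq3))).resolve_left (sub_ne_zero.mpr hq1)

section InsertSum

variable {R A : Type*} [CommRing R] [Ring A] [Algebra R A]

/-- The sum of the three words obtained by inserting `z` into `w ^ 2`, weighted by `s` for each step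
of `z` from the right end to the left. -/
def insertSumLeft (s : R) (w z : A) : A :=
  w ^ 2 * z + s • (w * z * w) + s ^ 2 • (z * w ^ 2)

/-- The mirror image of `insertSumLeft`: `z` moves from the left end to the right. -/
def insertSumRight (s : R) (w z : A) : A :=
  z * w ^ 2 + s • (w * z * w) + s ^ 2 • (w ^ 2 * z)

lemma insertSumLeft_eq_skewCommutator {q : R} (hq : 1 + q + q ^ 2 = 0) (b : R) (w z : A) :
    insertSumLeft (q * b) w z
      = w * (w * z - b • (z * w)) - (q ^ 2 * b) • ((w * z - b • (z * w)) * w) := by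
  simp only [insertSumLeft, pow_two w, mul_sub, sub_mul, mul_smul_comm, smul_mul_assoc, mul_assoc]
  match_scalars
  · ring
  · linear_combination b * hq
  · ring

lemma insertSumRight_eq_skewCommutator {q : R} (hq : 1 + q + q ^ 2 = 0) (b : R) (w z : A) :
    insertSumRight (q * b) w z
      = (z * w - b • (w * z)) * w - (q ^ 2 * b) • (w * (z * w - b • (w * z))) := by
  simp only [insertSumRight, pow_two w, mul_sub, sub_mul, mul_smul_comm, smul_mul_assoc, mul_assoc]
  match_scalars
  · ring
  · linear_combination b * hq
  · ring

end InsertSum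

section Bicharacter

variable {k : Type*} [Field k] {Q : Fin 2 → Fin 2 → k}

lemma qb_zero_left (β : Fin 2 → ℤ) : qb Q 0 β = 1 := by simp [qb]

lemma qb_zero_right (α : Fin 2 → ℤ) : qb Q α 0 = 1 := by simp [qb]

lemma qb_add_left (hQ : ∀ a b, Q a b ≠ 0) (α β γ : Fin 2 → ℤ) :
    qb Q (α + β) γ = qb Q α γ * qb Q β γ := by
  simp only [qb, Pi.add_apply, add_mul, zpow_add₀ (hQ _ _), Finset.prod_mul_distrib]

lemma qb_add_right (hQ : ∀ a b, Q a b ≠ 0) (α β γ : Fin 2 → ℤ) :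
    qb Q α (β + γ) = qb Q α β * qb Q α γ := by
  simp only [qb, Pi.add_apply, mul_add, zpow_add₀ (hQ _ _), Finset.prod_mul_distrib]

lemma qb_ee_ee (Q : Fin 2 → Fin 2 → k) (a b : Fin 2) : qb Q (ee a) (ee b) = Q a b := by
  fin_cases a <;> fin_cases b <;> simp [qb, ee]

/-- The braiding of two homogeneous elements of degrees `α` and `β` is of Cartan type `A₂` with
parameter `q`; the last condition is `χ(α, β) χ(β, α) = q⁻¹`, written without an inverse. -/
structure IsTypeA2 (Q : Fin 2 → Fin 2 → k) (q : k) (α β : Fin 2 → ℤ) : Prop where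
  qb_left : qb Q α α = q
  qb_right : qb Q β β = q
  mul_qb_mul_qb : q * (qb Q α β * qb Q β α) = 1

lemma IsTypeA2.sq_mul_qb_mul_sq_mul_qb {q : k} {α β : Fin 2 → ℤ} (hq : 1 + q + q ^ 2 = 0)
    (h : IsTypeA2 Q q α β) : q ^ 2 * qb Q β α * (q ^ 2 * qb Q α β) = 1 := by
  linear_combination q ^ 3 * h.mul_qb_mul_qb + (q - 1) * hq

lemma braidingMatrix_ne_zero {q q12 q21 : k} (hq : q ≠ 0) (h : q12 * q21 = q⁻¹) (a b : Fin 2) :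
    (![![q, q12], ![q21, q]] : Fin 2 → Fin 2 → k) a b ≠ 0 := by
  have h12 : q12 * q21 ≠ 0 := h ▸ inv_ne_zero hq
  fin_cases a <;> fin_cases b <;>
    simp [hq, left_ne_zero_of_mul h12, right_ne_zero_of_mul h12]

lemma isTypeA2_ee {q q12 q21 : k} (hq : q ≠ 0) (h : q12 * q21 = q⁻¹) :
    IsTypeA2 ![![q, q12], ![q21, q]] q (ee 0) (ee 1) where
  qb_left := by simp [qb_ee_ee]
  qb_right := by simp [qb_ee_ee]
  mul_qb_mul_qb := by simp [qb_ee_ee, h, hq]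

end Bicharacter

section Grading

variable {k : Type*} [Field k]

lemma one_mem_piece : (1 : FreeAlgebra k (Fin 2)) ∈ piece k 0 :=
  Submodule.subset_span ⟨[], by simp, by simp⟩

lemma gen_mem_piece (a : Fin 2) : (gen (k := k) a).1 ∈ piece k (gen (k := k) a).2 :=
  Submodule.subset_span
    ⟨[a], fun i => by simp [gen, ee, Pi.single_apply, List.count_singleton, eq_comm (a := a)],
      by simp [gen]⟩

lemma mul_mem_piece {d e : Fin 2 → ℤ} {x y : FreeAlgebra k (Fin 2)}
    (hx : x ∈ piece k d) (hy : y ∈ piece k e) : x * y ∈ piece k (d + e) := by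
  have h : piece k d * piece k e ≤ piece k (d + e) := by
    rw [piece, piece, Submodule.span_mul_span]
    refine Submodule.span_mono ?_
    rintro _ ⟨_, ⟨l, hl, rfl⟩, _, ⟨l', hl', rfl⟩, rfl⟩
    exact ⟨l ++ l', fun i => by simp [hl, hl'], by simp⟩
  exact h (Submodule.mul_mem_mul hx hy)

lemma mul_mem_piece_comm {d e : Fin 2 → ℤ} {x y : FreeAlgebra k (Fin 2)}
    (hx : x ∈ piece k d) (hy : y ∈ piece k e) : y * x ∈ piece k (d + e) :=
  add_comm e d ▸ mul_mem_piece hy hx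

lemma brk_mem_piece (Q : Fin 2 → Fin 2 → k) {p r : FreeAlgebra k (Fin 2) × (Fin 2 → ℤ)}
    (hp : p.1 ∈ piece k p.2) (hr : r.1 ∈ piece k r.2) :
    (brk Q p r).1 ∈ piece k (brk Q p r).2 :=
  sub_mem (mul_mem_piece hp hr) (Submodule.smul_mem _ _ (mul_mem_piece_comm hp hr))

end Grading

section BraidedCommutator

variable {k : Type*} [Field k] {Q : Fin 2 → Fin 2 → k} {q : k}
  {p r : FreeAlgebra k (Fin 2) × (Fin 2 → ℤ)}

lemma smul_brk_fst (Q : Fin 2 → Fin 2 → k) (c : k)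
    (p r : FreeAlgebra k (Fin 2) × (Fin 2 → ℤ)) :
    c • (brk Q p r).1 = p.1 * (c • r.1) - qb Q p.2 r.2 • ((c • r.1) * p.1) := by
  simp only [brk, smul_sub, mul_smul_comm, smul_mul_assoc, smul_comm c]

lemma brk_mul_sub_smul_mul_brk (hQ : ∀ a b, Q a b ≠ 0) (h : IsTypeA2 Q q p.2 r.2) :
    (brk Q p r).1 * p.1 - qb Q r.2 p.2 • (p.1 * (brk Q p r).1)
      = (-qb Q r.2 p.2) • (brk Q p (brk Q p r)).1 := by
  have hqb : qb Q p.2 (brk Q p r).2 = q * qb Q p.2 r.2 := by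
    rw [← h.qb_left]; exact qb_add_right hQ ..
  have hmul := h.mul_qb_mul_qb
  rw [smul_brk_fst, hqb, mul_smul_comm, smul_mul_assoc]
  simp only [brk, mul_sub, sub_mul, mul_smul_comm, smul_mul_assoc, mul_assoc]
  match_scalars <;> grind

lemma mul_brk_sub_smul_brk_mul (hQ : ∀ a b, Q a b ≠ 0) (h : IsTypeA2 Q q p.2 r.2) :
    r.1 * (brk Q p r).1 - qb Q r.2 p.2 • ((brk Q p r).1 * r.1)
      = (-qb Q p.2 r.2) • (brk Q r (brk Q r p)).1 := by
  have hqb : qb Q r.2 (brk Q r p).2 = q * qb Q r.2 p.2 := by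
    rw [← h.qb_right]; exact qb_add_right hQ ..
  have hmul := h.mul_qb_mul_qb
  rw [smul_brk_fst, hqb]
  simp only [brk, mul_sub, sub_mul, mul_smul_comm, smul_mul_assoc, ← mul_assoc]
  match_scalars <;> grind

lemma insertSumLeft_brk_left (hQ : ∀ a b, Q a b ≠ 0) (hq : 1 + q + q ^ 2 = 0)
    (h : IsTypeA2 Q q p.2 r.2) :
    insertSumLeft (q * qb Q r.2 p.2) (brk Q p r).1 p.1
      = (-qb Q r.2 p.2) • (brk Q (brk Q p r) (brk Q p (brk Q p r))).1 := by
  have hqb : qb Q (brk Q p r).2 (brk Q p (brk Q p r)).2 = q ^ 2 * qb Q r.2 p.2 := by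
    simp only [brk, qb_add_left hQ, qb_add_right hQ, h.qb_left, h.qb_right]
    linear_combination q ^ 2 * qb Q r.2 p.2 * h.mul_qb_mul_qb
  rw [insertSumLeft_eq_skewCommutator hq, smul_brk_fst, ← brk_mul_sub_smul_mul_brk hQ h, hqb]

lemma insertSumLeft_right_brk (hQ : ∀ a b, Q a b ≠ 0) (hq : 1 + q + q ^ 2 = 0)
    (h : IsTypeA2 Q q p.2 r.2) :
    insertSumLeft (q * qb Q r.2 p.2) r.1 (brk Q p r).1
      = (-qb Q p.2 r.2) • (brk Q r (brk Q r (brk Q r p))).1 := by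
  have hqb : qb Q r.2 (brk Q r (brk Q r p)).2 = q ^ 2 * qb Q r.2 p.2 := by
    simp only [brk, qb_add_right hQ, h.qb_right]
    ring
  rw [insertSumLeft_eq_skewCommutator hq, smul_brk_fst, ← mul_brk_sub_smul_brk_mul hQ h, hqb]

lemma insertSumRight_brk_right (hQ : ∀ a b, Q a b ≠ 0) (hq : 1 + q + q ^ 2 = 0)
    (h : IsTypeA2 Q q p.2 r.2) :
    insertSumRight (q * qb Q r.2 p.2) (brk Q p r).1 r.1
      = q • (brk Q (brk Q p r) (brk Q r (brk Q r p))).1 := by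
  have hqb : qb Q (brk Q p r).2 (brk Q r (brk Q r p)).2 = q ^ 2 * qb Q p.2 r.2 := by
    simp only [brk, qb_add_left hQ, qb_add_right hQ, h.qb_left, h.qb_right]
    linear_combination q ^ 2 * qb Q p.2 r.2 * h.mul_qb_mul_qb
  have hcoef : q = (-(q ^ 2 * qb Q r.2 p.2)) * -qb Q p.2 r.2 := by
    linear_combination -q * h.mul_qb_mul_qb
  conv_rhs => rw [hcoef, mul_smul, smul_brk_fst, ← mul_brk_sub_smul_brk_mul hQ h, hqb]
  rw [insertSumRight_eq_skewCommutator hq, smul_sub, smul_smul, neg_mul,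
    h.sq_mul_qb_mul_sq_mul_qb hq]
  module

lemma insertSumRight_left_brk (hQ : ∀ a b, Q a b ≠ 0) (hq : 1 + q + q ^ 2 = 0)
    (h : IsTypeA2 Q q p.2 r.2) :
    insertSumRight (q * qb Q r.2 p.2) p.1 (brk Q p r).1
      = (q * qb Q r.2 p.2) ^ 2 • (brk Q p (brk Q p (brk Q p r))).1 := by
  have hqb : qb Q p.2 (brk Q p (brk Q p r)).2 = q ^ 2 * qb Q p.2 r.2 := by
    simp only [brk, qb_add_right hQ, h.qb_left]
    ring
  have hcoef : (q * qb Q r.2 p.2) ^ 2 = (-(q ^ 2 * qb Q r.2 p.2)) * -qb Q r.2 p.2 := by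
    ring
  conv_rhs => rw [hcoef, mul_smul, smul_brk_fst, ← brk_mul_sub_smul_mul_brk hQ h, hqb]
  rw [insertSumRight_eq_skewCommutator hq, smul_sub, smul_smul, neg_mul,
    h.sq_mul_qb_mul_sq_mul_qb hq]
  module

lemma sum_tmul_brk_eq_smul_tmul_brk (hQ : ∀ a b, Q a b ≠ 0) (hq : 1 + q + q ^ 2 = 0)
    (h : IsTypeA2 Q q p.2 r.2) {s : k} (hs : s = q * qb Q r.2 p.2) :
    ((brk Q p r).1 * p.1) ⊗ₜ[k] (r.1 * (brk Q p r).1)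
        + (s * (1 + q)) • (((brk Q p r).1 * p.1) ⊗ₜ[k] ((brk Q p r).1 * r.1))
        + (s * (1 + q)) • ((p.1 * (brk Q p r).1) ⊗ₜ[k] (r.1 * (brk Q p r).1))
        + (s * s * q) • ((p.1 * (brk Q p r).1) ⊗ₜ[k] ((brk Q p r).1 * r.1))
      = (qb Q p.2 r.2 * qb Q r.2 p.2) •
          ((brk Q p (brk Q p r)).1 ⊗ₜ[k] (brk Q r (brk Q r p)).1) := by
  have hfactor : (qb Q p.2 r.2 * qb Q r.2 p.2) •
        ((brk Q p (brk Q p r)).1 ⊗ₜ[k] (brk Q r (brk Q r p)).1)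
      = ((-qb Q r.2 p.2) • (brk Q p (brk Q p r)).1)
        ⊗ₜ[k] ((-qb Q p.2 r.2) • (brk Q r (brk Q r p)).1) := by
    rw [TensorProduct.smul_tmul_smul]; congr 1; ring
  rw [hfactor, ← brk_mul_sub_smul_mul_brk hQ h, ← mul_brk_sub_smul_brk_mul hQ h, hs]
  simp only [TensorProduct.sub_tmul, TensorProduct.tmul_sub, ← TensorProduct.smul_tmul',
    TensorProduct.tmul_smul]
  match_scalars <;> grind

end BraidedCommutator

section BraidedComultiplication

variable {k : Type*} [Field k] {Q : Fin 2 → Fin 2 → k}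
  {m2 : (FreeAlgebra k (Fin 2) ⊗[k] FreeAlgebra k (Fin 2))
    →ₗ[k] (FreeAlgebra k (Fin 2) ⊗[k] FreeAlgebra k (Fin 2))
    →ₗ[k] (FreeAlgebra k (Fin 2) ⊗[k] FreeAlgebra k (Fin 2))}
  {Δ : FreeAlgebra k (Fin 2) →ₗ[k] FreeAlgebra k (Fin 2) ⊗[k] FreeAlgebra k (Fin 2)}

/-- `m2` is the multiplication of `T(V) ⊗ T(V)` twisted by the braiding of bicharacter `qb Q`. -/
def IsBraidedMul (Q : Fin 2 → Fin 2 → k)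
    (m2 : (FreeAlgebra k (Fin 2) ⊗[k] FreeAlgebra k (Fin 2))
      →ₗ[k] (FreeAlgebra k (Fin 2) ⊗[k] FreeAlgebra k (Fin 2))
      →ₗ[k] (FreeAlgebra k (Fin 2) ⊗[k] FreeAlgebra k (Fin 2))) : Prop :=
  ∀ (a b c d : FreeAlgebra k (Fin 2)) (β γ : Fin 2 → ℤ), b ∈ piece k β → c ∈ piece k γ →
    m2 (a ⊗ₜ b) (c ⊗ₜ d) = qb Q β γ • ((a * c) ⊗ₜ[k] (b * d))

/-- `x` is primitive for the comultiplication `Δ`. -/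
def IsPrimitive
    (Δ : FreeAlgebra k (Fin 2) →ₗ[k] FreeAlgebra k (Fin 2) ⊗[k] FreeAlgebra k (Fin 2))
    (x : FreeAlgebra k (Fin 2)) : Prop :=
  Δ x = x ⊗ₜ 1 + 1 ⊗ₜ x

lemma IsBraidedMul.tmul_one_tmul (hm : IsBraidedMul Q m2) {c : FreeAlgebra k (Fin 2)}
    {γ : Fin 2 → ℤ} (hc : c ∈ piece k γ) (a d : FreeAlgebra k (Fin 2)) :
    m2 (a ⊗ₜ 1) (c ⊗ₜ d) = (a * c) ⊗ₜ d := by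
  rw [hm a 1 c d 0 γ one_mem_piece hc, qb_zero_left, one_smul, one_mul]

lemma IsBraidedMul.tmul_tmul_one (hm : IsBraidedMul Q m2) {b : FreeAlgebra k (Fin 2)}
    {β : Fin 2 → ℤ} (hb : b ∈ piece k β) (a d : FreeAlgebra k (Fin 2)) :
    m2 (a ⊗ₜ b) (1 ⊗ₜ d) = a ⊗ₜ (b * d) := by
  rw [hm a b 1 d β 0 hb one_mem_piece, qb_zero_right, one_smul, mul_one]

lemma comul_mul_of_isPrimitive (hm : IsBraidedMul Q m2)
    (hΔmul : ∀ x y, Δ (x * y) = m2 (Δ x) (Δ y))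
    {p r : FreeAlgebra k (Fin 2) × (Fin 2 → ℤ)}
    (hp : p.1 ∈ piece k p.2) (hr : r.1 ∈ piece k r.2)
    (hΔp : IsPrimitive Δ p.1) (hΔr : IsPrimitive Δ r.1) :
    Δ (p.1 * r.1) = (p.1 * r.1) ⊗ₜ 1 + p.1 ⊗ₜ r.1 + qb Q p.2 r.2 • (r.1 ⊗ₜ p.1)
      + 1 ⊗ₜ (p.1 * r.1) := by
  rw [hΔmul, hΔp, hΔr]
  simp only [map_add, LinearMap.add_apply, hm.tmul_one_tmul hr, hm.tmul_one_tmul one_mem_piece,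
    hm.tmul_tmul_one hp, hm _ _ _ _ _ _ hp hr, one_mul, mul_one]
  abel

lemma comul_brk_of_isPrimitive (hm : IsBraidedMul Q m2)
    (hΔmul : ∀ x y, Δ (x * y) = m2 (Δ x) (Δ y))
    {p r : FreeAlgebra k (Fin 2) × (Fin 2 → ℤ)}
    (hp : p.1 ∈ piece k p.2) (hr : r.1 ∈ piece k r.2)
    (hΔp : IsPrimitive Δ p.1) (hΔr : IsPrimitive Δ r.1) :
    Δ (brk Q p r).1 = (brk Q p r).1 ⊗ₜ 1
      + (1 - qb Q p.2 r.2 * qb Q r.2 p.2) • (p.1 ⊗ₜ r.1) + 1 ⊗ₜ (brk Q p r).1 := by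
  simp only [brk, map_sub, map_smul, comul_mul_of_isPrimitive hm hΔmul hp hr hΔp hΔr,
    comul_mul_of_isPrimitive hm hΔmul hr hp hΔr hΔp, TensorProduct.sub_tmul,
    TensorProduct.tmul_sub, ← TensorProduct.smul_tmul', TensorProduct.tmul_smul]
  module

section Powers

variable {u x y : FreeAlgebra k (Fin 2) × (Fin 2 → ℤ)} {a : k}

lemma comul_sq (hm : IsBraidedMul Q m2) (hΔmul : ∀ x y, Δ (x * y) = m2 (Δ x) (Δ y))
    (hu : u.1 ∈ piece k u.2) (hx : x.1 ∈ piece k x.2) (hy : y.1 ∈ piece k y.2)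
    (hΔu : Δ u.1 = u.1 ⊗ₜ 1 + a • (x.1 ⊗ₜ y.1) + 1 ⊗ₜ u.1) :
    Δ (u.1 ^ 2) = (u.1 ^ 2) ⊗ₜ 1 + (1 + qb Q u.2 u.2) • (u.1 ⊗ₜ u.1) + 1 ⊗ₜ (u.1 ^ 2)
      + a • ((u.1 * x.1 + qb Q y.2 u.2 • (x.1 * u.1)) ⊗ₜ y.1)
      + a • (x.1 ⊗ₜ (y.1 * u.1 + qb Q u.2 x.2 • (u.1 * y.1)))
      + (a ^ 2 * qb Q y.2 x.2) • ((x.1 ^ 2) ⊗ₜ (y.1 ^ 2)) := by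
  rw [pow_two, hΔmul, hΔu]
  simp only [map_add, map_smul, LinearMap.add_apply, LinearMap.smul_apply,
    hm.tmul_one_tmul hu, hm.tmul_one_tmul hx, hm.tmul_one_tmul one_mem_piece,
    hm.tmul_tmul_one hu, hm.tmul_tmul_one hy,
    hm _ _ _ _ _ _ hu hu, hm _ _ _ _ _ _ hu hx, hm _ _ _ _ _ _ hy hu, hm _ _ _ _ _ _ hy hx,
    one_mul, mul_one, pow_two (_ : FreeAlgebra k (Fin 2)), TensorProduct.add_tmul,
    TensorProduct.tmul_add, ← TensorProduct.smul_tmul', TensorProduct.tmul_smul]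
  module

lemma comul_cube (hQ : ∀ a b, Q a b ≠ 0) (hm : IsBraidedMul Q m2)
    (hΔmul : ∀ x y, Δ (x * y) = m2 (Δ x) (Δ y))
    (hu : u.1 ∈ piece k u.2) (hx : x.1 ∈ piece k x.2) (hy : y.1 ∈ piece k y.2)
    (hΔu : Δ u.1 = u.1 ⊗ₜ 1 + a • (x.1 ⊗ₜ y.1) + 1 ⊗ₜ u.1)
    {c r s t : k} (hc : qb Q u.2 u.2 = c) (hr : qb Q y.2 x.2 = r)
    (hs : qb Q y.2 u.2 = s) (ht : qb Q u.2 x.2 = t) :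
    Δ (u.1 ^ 3) = (u.1 ^ 3) ⊗ₜ 1 + 1 ⊗ₜ (u.1 ^ 3)
      + (1 + c + c ^ 2) • ((u.1 ^ 2) ⊗ₜ u.1 + u.1 ⊗ₜ (u.1 ^ 2))
      + a • (insertSumLeft s u.1 x.1 ⊗ₜ y.1)
      + a • (x.1 ⊗ₜ insertSumRight t u.1 y.1)
      + a • ((u.1 * x.1) ⊗ₜ (y.1 * u.1)
          + (t * (1 + c)) • ((u.1 * x.1) ⊗ₜ (u.1 * y.1))
          + (s * (1 + c)) • ((x.1 * u.1) ⊗ₜ (y.1 * u.1))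
          + (s * t * c) • ((x.1 * u.1) ⊗ₜ (u.1 * y.1)))
      + (a ^ 2 * r) • (insertSumRight s x.1 u.1 ⊗ₜ (y.1 ^ 2))
      + (a ^ 2 * r) • ((x.1 ^ 2) ⊗ₜ insertSumLeft t y.1 u.1)
      + (a ^ 3 * r ^ 3) • ((x.1 ^ 3) ⊗ₜ (y.1 ^ 3)) := by
  subst hc hr hs ht
  have huu : u.1 ^ 2 ∈ piece k (u.2 + u.2) := by rw [pow_two]; exact mul_mem_piece hu hu
  have hxx : x.1 ^ 2 ∈ piece k (x.2 + x.2) := by rw [pow_two]; exact mul_mem_piece hx hx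
  have hux : u.1 * x.1 + qb Q y.2 u.2 • (x.1 * u.1) ∈ piece k (u.2 + x.2) :=
    add_mem (mul_mem_piece hu hx) (Submodule.smul_mem _ _ (mul_mem_piece_comm hu hx))
  rw [pow_succ' u.1 2, hΔmul, comul_sq hm hΔmul hu hx hy hΔu, hΔu]
  simp only [map_add (m2 _), map_add m2, map_smul, LinearMap.add_apply, LinearMap.smul_apply,
    hm.tmul_one_tmul hu, hm.tmul_one_tmul hx, hm.tmul_one_tmul huu, hm.tmul_one_tmul hxx,
    hm.tmul_one_tmul hux, hm.tmul_one_tmul one_mem_piece,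
    hm.tmul_tmul_one hu, hm.tmul_tmul_one hy,
    hm _ _ _ _ _ _ hu hu, hm _ _ _ _ _ _ hu hx, hm _ _ _ _ _ _ hu huu,
    hm _ _ _ _ _ _ hu hxx, hm _ _ _ _ _ _ hu hux,
    hm _ _ _ _ _ _ hy hu, hm _ _ _ _ _ _ hy hx, hm _ _ _ _ _ _ hy huu,
    hm _ _ _ _ _ _ hy hxx, hm _ _ _ _ _ _ hy hux, qb_add_right hQ]
  simp only [insertSumLeft, insertSumRight, pow_succ _ 2, pow_two (_ : FreeAlgebra k (Fin 2)),
    one_mul, mul_one, mul_add, mul_smul_comm, mul_assoc, TensorProduct.add_tmul,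
    TensorProduct.tmul_add, ← TensorProduct.smul_tmul', TensorProduct.tmul_smul]
  module

end Powers

end BraidedComultiplication

end Stmt15

theorem stmt15_general {k : Type*} [Field k] {q q21 : k} (hq : 1 + q + q ^ 2 = 0)
    {Q : Fin 2 → Fin 2 → k} (hQ : ∀ a b, Q a b ≠ 0)
    {m2 : (FreeAlgebra k (Fin 2) ⊗[k] FreeAlgebra k (Fin 2))
      →ₗ[k] (FreeAlgebra k (Fin 2) ⊗[k] FreeAlgebra k (Fin 2))
      →ₗ[k] (FreeAlgebra k (Fin 2) ⊗[k] FreeAlgebra k (Fin 2))}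
    (hm : IsBraidedMul Q m2)
    {Δ : FreeAlgebra k (Fin 2) →ₗ[k] FreeAlgebra k (Fin 2) ⊗[k] FreeAlgebra k (Fin 2)}
    (hΔmul : ∀ x y, Δ (x * y) = m2 (Δ x) (Δ y))
    {p r : FreeAlgebra k (Fin 2) × (Fin 2 → ℤ)}
    (hp : p.1 ∈ piece k p.2) (hr : r.1 ∈ piece k r.2)
    (hΔp : IsPrimitive Δ p.1) (hΔr : IsPrimitive Δ r.1)
    (h : IsTypeA2 Q q p.2 r.2) (hq21 : qb Q r.2 p.2 = q21) :
    Δ ((brk Q p r).1 ^ 3)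
      = ((brk Q p r).1 ^ 3) ⊗ₜ 1
        + 1 ⊗ₜ ((brk Q p r).1 ^ 3)
        + (q⁻¹ - q⁻¹ ^ 2) • ((brk Q p (brk Q p r)).1 ⊗ₜ (brk Q r (brk Q r p)).1)
        + ((1 - q⁻¹) ^ 3 * q21 ^ 3) • ((p.1 ^ 3) ⊗ₜ (r.1 ^ 3))
        + ((1 - q) ^ 2 * q21 ^ 3) • ((brk Q p (brk Q p (brk Q p r))).1 ⊗ₜ (r.1 ^ 2))
        - ((1 - q⁻¹) ^ 2 * q⁻¹) • ((p.1 ^ 2) ⊗ₜ (brk Q r (brk Q r (brk Q r p))).1)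
        + (q - 1) • (p.1 ⊗ₜ (brk Q (brk Q p r) (brk Q r (brk Q r p))).1)
        - ((1 - q⁻¹) * q21) • ((brk Q (brk Q p r) (brk Q p (brk Q p r))).1 ⊗ₜ r.1) := by
  subst hq21
  have hmul := h.mul_qb_mul_qb
  have hqi : q⁻¹ = -1 - q := inv_eq_of_mul_eq_one_right (by linear_combination -hq)
  have hΔu := comul_brk_of_isPrimitive hm hΔmul hp hr hΔp hΔr
  have huu : qb Q (brk Q p r).2 (brk Q p r).2 = q := by
    simp only [brk, qb_add_left hQ, qb_add_right hQ, h.qb_left, h.qb_right]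
    linear_combination q * hmul
  have hru : qb Q r.2 (brk Q p r).2 = q * qb Q r.2 p.2 := by
    simp only [brk, qb_add_right hQ, h.qb_right, mul_comm]
  have hup : qb Q (brk Q p r).2 p.2 = q * qb Q r.2 p.2 := by
    simp only [brk, qb_add_left hQ, h.qb_left]
  rw [comul_cube hQ hm hΔmul (brk_mem_piece Q hp hr) hp hr hΔu huu rfl hru hup,
    sum_tmul_brk_eq_smul_tmul_brk hQ hq h rfl, insertSumLeft_brk_left hQ hq h,
    insertSumLeft_right_brk hQ hq h, insertSumRight_brk_right hQ hq h,
    insertSumRight_left_brk hQ hq h, hq]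
  simp only [hqi, TensorProduct.tmul_smul, ← TensorProduct.smul_tmul']
  match_scalars <;> grind

/-- In the braided tensor algebra `T(V)` of type `A_2` with `q` of
order 3 (`q_11 = q_22 = q`, `q_12 q_21 = q⁻¹`), with braided comultiplication `Δ`
(the algebra map for the braiding-twisted product on `T(V) ⊗ T(V)` determined by the
bicharacter, with the generators primitive), it holds:
`Δ(x_12³) = x_12³ ⊗ 1 + 1 ⊗ x_12³ + (q⁻¹ − q⁻²) x_112 ⊗ x_221
  + (1−q⁻¹)³ q_21³ x_1³ ⊗ x_2³ + (1−q)² q_21³ x_1112 ⊗ x_2²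
  − (1−q⁻¹)² q⁻¹ x_1² ⊗ x_2221 + (q−1) x_1 ⊗ [x_12,x_221]_c
  − (1−q⁻¹) q_21 [x_12,x_112]_c ⊗ x_2`. -/
theorem stmt15 {k : Type*} [Field k] [CharZero k]
    (q q12 q21 : k) (hq3 : q ^ 3 = 1) (hq1 : q ≠ 1) (hq12 : q12 ≠ 0)
    (hq21 : q12 * q21 = q⁻¹)
    (Q : Fin 2 → Fin 2 → k) (hQ : Q = ![![q, q12], ![q21, q]])
    (m2 : (FreeAlgebra k (Fin 2) ⊗[k] FreeAlgebra k (Fin 2))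
      →ₗ[k] (FreeAlgebra k (Fin 2) ⊗[k] FreeAlgebra k (Fin 2))
      →ₗ[k] (FreeAlgebra k (Fin 2) ⊗[k] FreeAlgebra k (Fin 2)))
    (hm2 : ∀ (a b c d : FreeAlgebra k (Fin 2)) (β' γ' : Fin 2 → ℤ),
      b ∈ piece k β' → c ∈ piece k γ' →
      m2 (a ⊗ₜ b) (c ⊗ₜ d) = qb Q β' γ' • ((a * c) ⊗ₜ[k] (b * d)))
    (Δ : FreeAlgebra k (Fin 2) →ₗ[k] FreeAlgebra k (Fin 2) ⊗[k] FreeAlgebra k (Fin 2))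
    (hΔmul : ∀ x y, Δ (x * y) = m2 (Δ x) (Δ y))
    (hΔone : Δ 1 = 1 ⊗ₜ 1)
    (hΔgen : ∀ a : Fin 2, Δ (FreeAlgebra.ι k a)
      = FreeAlgebra.ι k a ⊗ₜ 1 + 1 ⊗ₜ FreeAlgebra.ι k a) :
    Δ ((brk Q (gen 0) (gen 1)).1 ^ 3)
      = ((brk Q (gen 0) (gen 1)).1 ^ 3) ⊗ₜ 1
        + 1 ⊗ₜ ((brk Q (gen 0) (gen 1)).1 ^ 3)
        + (q⁻¹ - q⁻¹ ^ 2) •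
            ((brk Q (gen 0) (brk Q (gen 0) (gen 1))).1
              ⊗ₜ (brk Q (gen 1) (brk Q (gen 1) (gen 0))).1)
        + ((1 - q⁻¹) ^ 3 * q21 ^ 3) •
            ((FreeAlgebra.ι k 0 ^ 3) ⊗ₜ (FreeAlgebra.ι k 1 ^ 3))
        + ((1 - q) ^ 2 * q21 ^ 3) •
            ((brk Q (gen 0) (brk Q (gen 0) (brk Q (gen 0) (gen 1)))).1
              ⊗ₜ (FreeAlgebra.ι k 1 ^ 2))
        - ((1 - q⁻¹) ^ 2 * q⁻¹) •
            ((FreeAlgebra.ι k 0 ^ 2)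
              ⊗ₜ (brk Q (gen 1) (brk Q (gen 1) (brk Q (gen 1) (gen 0)))).1)
        + (q - 1) •
            (FreeAlgebra.ι k 0
              ⊗ₜ (brk Q (brk Q (gen 0) (gen 1)) (brk Q (gen 1) (brk Q (gen 1) (gen 0)))).1)
        - ((1 - q⁻¹) * q21) •
            ((brk Q (brk Q (gen 0) (gen 1)) (brk Q (gen 0) (brk Q (gen 0) (gen 1)))).1
              ⊗ₜ FreeAlgebra.ι k 1) := by
  subst hQ
  have hq0 : q ≠ 0 := by rintro rfl; simp at hq3
  exact stmt15_general (one_add_add_sq_eq_zero hq3 hq1) (braidingMatrix_ne_zero hq0 hq21) hm2 hΔmul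
    (gen_mem_piece 0) (gen_mem_piece 1) (hΔgen 0) (hΔgen 1) (isTypeA2_ee hq0 hq21) (qb_ee_ee _ 1 0)

end
end
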